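/- arXiv:2412.12514 — 2 statements merged into one kernel-verified Lean document; each statement's English description precedes it below -/
import Mathlib

section
/- Let F_1,...,F_ℓ ∈ ℂ[x_1,...,x_k] be linearly independent polynomials such that λ_1 F_1 + ... + λ_ℓ F_ℓ is irreducible for general (λ_1,...,λ_ℓ) ∈ ℂ^ℓ. For n ≥ ℓ, introduce n disjoint sets of variables x_j = (x_{1j},...,x_{kj}) and form the ℓ×n matrix with entries F_i(x_j). Then the ideal of its maximal (ℓ×ℓ) minors in ℂ[x_{ij}] is a prime ideal of codimension n − ℓ + 1. -/
open MvPolynomial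

/-!
Write `λ` for independent indeterminates and `Q` for the ideal of polynomials in `n` points that
vanish whenever all the points lie on the generic hypersurface `∑ λᵢFᵢ = 0`; it is the contraction
of the ideal `(∑ λᵢFᵢ(x₁), …, ∑ λᵢFᵢ(xₙ))` over `K(λ)`. The generic member is irreducible over the
algebraic closure of `K(λ)`, since a factorization would specialize to one of a general member;
products of integral schemes over an algebraically closed field are integral, so `Q` is prime.

The minors lie in `Q` because `λ` is a left kernel vector of the matrix modulo that ideal. For the
converse, replace the `Fᵢ` by a basis of their span with strictly decreasing leading monomials and
induct on `n`, comparing leading coefficients in the variables of one point. For an element of `Q`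
whose leading monomial is divisible by that of `F₀`, letting `λ₀` tend to `0` (over a power series
ring in `λ₀`) puts the leading coefficient into the corresponding ideal of `F₁, …, F_ℓ`, hence, by
induction, into the ideal of their minors, which are the leading coefficients of the minors of
`F₀, …, F_ℓ` up to units. For the other leading monomials it already lies in the ideal of `n - 1`
points.

Let `F₀, …, F_ℓ` be the system. Away from a fixed `ℓ × ℓ` minor, the maximal minors containing its
columns, `n - ℓ` in number, cut out the same locus as all of them, and Krull's theorem bounds the
height by `n - ℓ`; the ideals for `ℓ, ℓ + 1, …, n` points, extended to `n` points, form a strictly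
increasing chain of primes.
-/

namespace GenericMinors

open scoped MonomialOrder TensorProduct

section AlgClosed

variable {K D : Type*} [Field K] [IsAlgClosed K] [CommRing D] [Algebra K D]
  [Algebra.FiniteType K D]

theorem exists_algHom_apply_ne_zero [IsReduced D] {d : D} (hd : d ≠ 0) :
    ∃ ψ : D →ₐ[K] K, ψ d ≠ 0 := by
  have : IsJacobsonRing D := isJacobsonRing_of_finiteType (A := K)
  have hbot : (⊥ : Ideal D).jacobson = ⊥ := IsJacobsonRing.out ‹_› <|
    Ideal.radical_eq_iff.mp (nilradical_eq_zero D)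
  obtain ⟨M, hM, hdM⟩ : ∃ M : Ideal D, M.IsMaximal ∧ d ∉ M := by
    by_contra! h
    exact hd <| Ideal.mem_bot.mp <| hbot ▸ Ideal.mem_sInf.mpr fun {M} hM => h M hM.2
  let _ := Ideal.Quotient.field M
  have : Module.Finite K (D ⧸ M) := finite_of_finite_type_of_isJacobsonRing K (D ⧸ M)
  let e : K ≃ₐ[K] D ⧸ M := AlgEquiv.ofBijective (Algebra.ofId K (D ⧸ M))
    IsAlgClosed.algebraMap_bijective_of_isIntegral
  refine ⟨(e.symm : (D ⧸ M) →ₐ[K] K).comp (Ideal.Quotient.mkₐ K M), fun h => hdM ?_⟩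
  exact Ideal.Quotient.eq_zero_iff_mem.mp ((map_eq_zero_iff e.symm e.symm.injective).mp h)

theorem isDomain_tensorProduct [IsDomain D] (A : Type*) [CommRing A] [IsDomain A] [Algebra K A] :
    IsDomain (D ⊗[K] A) := by
  let b := Module.Basis.ofVectorSpace K A
  let spec (ψ : D →ₐ[K] K) : D ⊗[K] A →ₐ[K] A :=
    Algebra.TensorProduct.lift ((Algebra.ofId K A).comp ψ) (AlgHom.id K A) fun _ _ => .all _ _
  have repr_spec (ψ : D →ₐ[K] K) (x : D ⊗[K] A) (i) :
      b.repr (spec ψ x) i = ψ ((b.baseChange D).repr x i) := by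
    induction x with
    | zero => simp
    | tmul d a => simp [spec, Algebra.ofId_apply, ← Algebra.smul_def, mul_comm (b.repr a i)]
    | add x y hx hy => simp [hx, hy]
  have : Nontrivial (D ⊗[K] A) := by infer_instance
  have : NoZeroDivisors (D ⊗[K] A) := by
    refine ⟨fun {x y} hxy => ?_⟩
    by_contra! hne
    -- Specialize `D` to `K` so that a nonzero coordinate of `x` and one of `y` both survive.
    obtain ⟨i, hi⟩ := Finsupp.ne_iff.mp ((b.baseChange D).repr.map_ne_zero_iff.mpr hne.1)
    obtain ⟨j, hj⟩ := Finsupp.ne_iff.mp ((b.baseChange D).repr.map_ne_zero_iff.mpr hne.2)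
    obtain ⟨ψ, hψ⟩ := exists_algHom_apply_ne_zero (K := K) (mul_ne_zero hi hj)
    rw [map_mul, ← repr_spec, ← repr_spec] at hψ
    have hspec : spec ψ x * spec ψ y = 0 := by rw [← map_mul, hxy, map_zero]
    rcases mul_eq_zero.mp hspec with h | h <;> simp [h] at hψ
  exact NoZeroDivisors.to_isDomain _

theorem isPrime_map_C_sup_map {σ : Type*} (Q : Ideal D) [Q.IsPrime]
    (P : Ideal (MvPolynomial σ K)) [P.IsPrime] :
    (Q.map (C (σ := σ)) ⊔ P.map (map (algebraMap K D))).IsPrime := by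
  have := isDomain_tensorProduct (K := K) (D := D ⧸ Q) (MvPolynomial σ K ⧸ P)
  let q := Algebra.TensorProduct.map (Ideal.Quotient.mkₐ K Q) (Ideal.Quotient.mkₐ K P)
  have hker : RingHom.ker q =
      Q.map (Algebra.TensorProduct.includeLeft : D →ₐ[K] D ⊗[K] MvPolynomial σ K) ⊔
        P.map (Algebra.TensorProduct.includeRight : _ →ₐ[K] D ⊗[K] MvPolynomial σ K) := by
    have hQ : RingHom.ker (Ideal.Quotient.mkₐ K Q) = Q := Ideal.mk_ker
    have hP : RingHom.ker (Ideal.Quotient.mkₐ K P) = P := Ideal.mk_ker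
    rw [Algebra.TensorProduct.map_ker _ _ (Ideal.Quotient.mkₐ_surjective K Q)
      (Ideal.Quotient.mkₐ_surjective K P), hQ, hP]
  have hprime : (RingHom.ker q).IsPrime := RingHom.ker_isPrime q
  let e := (algebraTensorAlgEquiv (σ := σ) K D).restrictScalars K
  have hleft : e.toAlgHom.comp Algebra.TensorProduct.includeLeft =
      IsScalarTower.toAlgHom K D (MvPolynomial σ D) :=
    AlgHom.ext fun d => by simp [e, smul_eq_C_mul]
  have hright : e.toAlgHom.comp Algebra.TensorProduct.includeRight =
      mapAlgHom (Algebra.ofId K D) := by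
    ext i
    simp [e]
  have hmap : (RingHom.ker q).map e.toAlgHom =
      Q.map (C (σ := σ)) ⊔ P.map (map (algebraMap K D)) := by
    rw [hker, Ideal.map_sup, Ideal.map_mapₐ, Ideal.map_mapₐ, hleft, hright]
    rfl
  exact hmap ▸ Ideal.map_isPrime_of_equiv e

theorem isUnit_of_coeff_eq_zero {σ L : Type*} [Field L] {g : MvPolynomial σ L} (hg : g ≠ 0)
    (h : ∀ d ≠ 0, coeff d g = 0) : IsUnit g := by
  obtain ⟨d, hd⟩ := ne_zero_iff.mp hg
  obtain rfl : d = 0 := by_contra fun hd0 => hd (h d hd0)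
  exact isUnit_iff.mpr ⟨isUnit_iff_ne_zero.mpr hd, fun i hi => by simp [h i hi]⟩

theorem coeff_eq_zero_of_isUnit {σ R : Type*} [CommRing R] [IsReduced R] {g : MvPolynomial σ R}
    (hg : IsUnit g) {d : σ →₀ ℕ} (hd : d ≠ 0) : coeff d g = 0 :=
  ((isUnit_iff.mp hg).2 d hd).eq_zero

theorem coeff_eq_zero_or_of_eq_mul {σ : Type*} [IsDomain D] {f g h : MvPolynomial σ D} {s : D}
    (hs : s ≠ 0) (hf : ∀ ψ : D →ₐ[K] K, ψ s ≠ 0 → Irreducible (map (ψ : D →+* K) f))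
    (hfgh : f = g * h) : (∀ d ≠ 0, coeff d g = 0) ∨ ∀ d ≠ 0, coeff d h = 0 := by
  by_contra! hne
  obtain ⟨⟨d, hd, hgd⟩, e, he, hhe⟩ := hne
  obtain ⟨ψ, hψ⟩ := exists_algHom_apply_ne_zero (K := K) (mul_ne_zero hs (mul_ne_zero hgd hhe))
  simp only [map_mul, mul_ne_zero_iff] at hψ
  rcases (hf ψ hψ.1).isUnit_or_isUnit (hfgh ▸ map_mul _ g h) with hu | hu
  · exact hψ.2.1 (by simpa [coeff_map] using coeff_eq_zero_of_isUnit hu hd)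
  · exact hψ.2.2 (by simpa [coeff_map] using coeff_eq_zero_of_isUnit hu he)

theorem exists_fg_subalgebra_mem_range_map {σ L : Type*} (R : Type*) [CommRing R] [CommRing L]
    [Algebra R L] (g h : MvPolynomial σ L) :
    ∃ E : Subalgebra R L, E.FG ∧ g ∈ (map (algebraMap E L)).range ∧
      h ∈ (map (algebraMap E L)).range := by
  classical
  let E := Algebra.adjoin R ((g.coeffs ∪ h.coeffs : Finset L) : Set L)
  have hE : ∀ c ∈ g.coeffs ∪ h.coeffs, c ∈ Set.range (algebraMap E L) := fun c hc =>
    ⟨⟨c, Algebra.subset_adjoin hc⟩, rfl⟩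
  exact ⟨E, Subalgebra.fg_adjoin_finset _,
    mem_range_map_iff_coeffs_subset.mpr fun c hc => hE c (Finset.mem_union_left _ hc),
    mem_range_map_iff_coeffs_subset.mpr fun c hc => hE c (Finset.mem_union_right _ hc)⟩

theorem irreducible_map_of_forall_algHom {σ L : Type*} [Field L] [Algebra K L] [Algebra D L]
    [IsScalarTower K D L] [FaithfulSMul D L] {f : MvPolynomial σ D} {s : D} (hs : s ≠ 0)
    (hf : ∀ ψ : D →ₐ[K] K, ψ s ≠ 0 → Irreducible (map (ψ : D →+* K) f)) :
    Irreducible (map (algebraMap D L) f) := by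
  have hinj : Function.Injective (algebraMap D L) := FaithfulSMul.algebraMap_injective D L
  have : IsDomain D := hinj.isDomain
  obtain ⟨d, hd, hfd⟩ : ∃ d ≠ 0, coeff d (map (algebraMap D L) f) ≠ 0 := by
    obtain ⟨ψ, hψ⟩ := exists_algHom_apply_ne_zero (K := K) hs
    by_contra! h
    simp only [coeff_map, map_eq_zero_iff _ hinj] at h
    refine (hf ψ hψ).not_isUnit (isUnit_of_coeff_eq_zero (hf ψ hψ).ne_zero fun d hd => ?_)
    rw [coeff_map, h d hd, map_zero]
  refine ⟨fun hu => hfd (coeff_eq_zero_of_isUnit hu hd), fun g h hgh => ?_⟩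
  have hgh0 : g * h ≠ 0 := hgh ▸ fun h => hfd (by simp [h])
  -- A factorization over `L` is defined over some `E` of finite type, which specializes to `K`.
  obtain ⟨E, hE, ⟨g', hg'⟩, h', hh'⟩ := exists_fg_subalgebra_mem_range_map D g h
  have : Algebra.FiniteType D E := E.fg_iff_finiteType.mp hE
  have : Algebra.FiniteType K E := .trans ‹_› ‹Algebra.FiniteType D E›
  have hfE : map (algebraMap D E) f = g' * h' :=
    map_injective (algebraMap E L) Subtype.val_injective <| by
      rw [map_mul, hg', hh', map_map, ← IsScalarTower.algebraMap_eq, hgh]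
  have hsE : algebraMap D E s ≠ 0 := by
    rwa [Ne, FaithfulSMul.algebraMap_eq_zero_iff]
  have hirr (ψ : E →ₐ[K] K) (hψ : ψ (algebraMap D E s) ≠ 0) :
      Irreducible (map (ψ : E →+* K) (map (algebraMap D E) f)) := by
    rw [map_map]
    exact hf (ψ.comp (IsScalarTower.toAlgHom K D E)) hψ
  refine (coeff_eq_zero_or_of_eq_mul hsE hirr hfE).imp (fun hp => ?_) (fun hp => ?_)
  · refine isUnit_of_coeff_eq_zero (left_ne_zero_of_mul hgh0) fun d hd => ?_
    rw [← hg', coeff_map, hp d hd, map_zero]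
  · refine isUnit_of_coeff_eq_zero (right_ne_zero_of_mul hgh0) fun d hd => ?_
    rw [← hh', coeff_map, hp d hd, map_zero]

end AlgClosed

section Blocks

variable {σ P Q : Type*} [CommRing P] [CommRing Q] {n : ℕ}

/-- The ideal `(f(x_1), …, f(x_n))` of the `n`-tuples of points on the hypersurface `f = 0`. -/
noncomputable def blockIdeal (f : MvPolynomial σ P) (n : ℕ) : Ideal (MvPolynomial (σ × Fin n) P) :=
  Ideal.span (Set.range fun j : Fin n => rename (·, j) f)

/-- Separates block `0` from the other blocks of variables. -/
def blockIndexEquiv (σ : Type*) (n : ℕ) : σ × Fin (n + 1) ≃ σ ⊕ σ × Fin n where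
  toFun p := Fin.cases (Sum.inl p.1) (fun j => Sum.inr (p.1, j)) p.2
  invFun := Sum.elim (·, 0) (Prod.map id Fin.succ)
  left_inv := by rintro ⟨a, j⟩; cases j using Fin.cases <;> simp
  right_inv := by rintro (a | ⟨a, j⟩) <;> simp

/-- Polynomials in `n + 1` blocks of variables as polynomials in block `0`, with coefficients
polynomials in the `n` other blocks. -/
noncomputable def splitBlock (σ P : Type*) [CommRing P] (n : ℕ) :
    MvPolynomial (σ × Fin (n + 1)) P ≃ₐ[P] MvPolynomial σ (MvPolynomial (σ × Fin n) P) :=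
  (renameEquiv P (blockIndexEquiv σ n)).trans (sumAlgEquiv P σ (σ × Fin n))

theorem splitBlock_rename_zero (f : MvPolynomial σ P) :
    splitBlock σ P n (rename (·, 0) f) = map C f := by
  induction f using MvPolynomial.induction_on <;> simp_all [splitBlock, blockIndexEquiv]

theorem splitBlock_rename_succ (f : MvPolynomial (σ × Fin n) P) :
    splitBlock σ P n (rename (Prod.map id Fin.succ) f) = C f := by
  induction f using MvPolynomial.induction_on <;> simp_all [splitBlock, blockIndexEquiv]

theorem splitBlock_rename_mk_succ (f : MvPolynomial σ P) (j : Fin n) :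
    splitBlock σ P n (rename (·, j.succ) f) = C (rename (·, j) f) := by
  rw [← splitBlock_rename_succ, rename_rename]
  rfl

theorem splitBlock_map (φ : P →+* Q) (g : MvPolynomial (σ × Fin (n + 1)) P) :
    splitBlock σ Q n (map φ g) = map (map φ) (splitBlock σ P n g) := by
  induction g using MvPolynomial.induction_on with
  | C a => simp [splitBlock, blockIndexEquiv]
  | add p q hp hq => simp only [map_add, hp, hq]
  | mul_X p i hp =>
    obtain ⟨a, j⟩ := i
    cases j using Fin.cases <;> simp_all [splitBlock, blockIndexEquiv]

theorem map_blockIdeal (φ : P →+* Q) (f : MvPolynomial σ P) :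
    (blockIdeal f n).map (map φ) = blockIdeal (map φ f) n := by
  simp only [blockIdeal, Ideal.map_span, ← Set.range_comp, Function.comp_def, map_rename]

theorem map_splitBlock_blockIdeal (f : MvPolynomial σ P) :
    (blockIdeal f (n + 1)).map (splitBlock σ P n) =
      (blockIdeal f n).map C ⊔ Ideal.span {map C f} := by
  rw [blockIdeal, blockIdeal, Fin.range_fin_succ, Ideal.map_span, Ideal.map_span,
    Set.image_insert_eq, Ideal.span_insert, sup_comm, ← Set.range_comp, ← Set.range_comp,
    splitBlock_rename_zero]
  simp only [Fin.tail_def, Function.comp_def, splitBlock_rename_mk_succ]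

theorem blockIdeal_isPrime {K : Type*} [Field K] [IsAlgClosed K] [Finite σ] {f : MvPolynomial σ K}
    (hf : Irreducible f) (n : ℕ) : (blockIdeal f n).IsPrime := by
  induction n with
  | zero => simpa [blockIdeal] using Ideal.isPrime_bot
  | succ n ih =>
    have : (Ideal.span {f}).IsPrime := (Ideal.span_singleton_prime hf.ne_zero).mpr hf.prime
    have h := isPrime_map_C_sup_map (blockIdeal f n) (Ideal.span {f})
    rw [Ideal.map_span, Set.image_singleton, algebraMap_eq, ← map_splitBlock_blockIdeal] at h
    rw [← Ideal.comap_map_of_bijective (splitBlock σ K n) (splitBlock σ K n).bijective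
      (I := blockIdeal f (n + 1))]
    exact h.comap _

theorem splitBlock_mem_map_iff {I : Ideal (MvPolynomial (σ × Fin (n + 1)) P)}
    {g : MvPolynomial (σ × Fin (n + 1)) P} :
    splitBlock σ P n g ∈ I.map (splitBlock σ P n) ↔ g ∈ I := by
  rw [← Ideal.mem_comap, Ideal.comap_map_of_bijective _ (splitBlock σ P n).bijective]

theorem mem_blockIdeal_succ_iff {f : MvPolynomial σ P} {g : MvPolynomial (σ × Fin (n + 1)) P} :
    g ∈ blockIdeal f (n + 1) ↔
      map ((Ideal.Quotient.mk (blockIdeal f n)).comp C) f ∣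
        map (Ideal.Quotient.mk (blockIdeal f n)) (splitBlock σ P n g) := by
  let q := map (σ := σ) (Ideal.Quotient.mk (blockIdeal f n))
  have hq : Function.Surjective q := map_surjective _ Ideal.Quotient.mk_surjective
  have hker : (blockIdeal f n).map (C (σ := σ)) = Ideal.comap q ⊥ := by
    rw [← RingHom.ker_eq_comap_bot, ker_map, Ideal.mk_ker]
  rw [← splitBlock_mem_map_iff, map_splitBlock_blockIdeal, hker, sup_comm,
    ← Ideal.comap_map_of_surjective q hq, Ideal.mem_comap, Ideal.map_span, Set.image_singleton,
    Ideal.mem_span_singleton, map_map]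

end Blocks

section MonomialOrder

variable {σ : Type*} {m : MonomialOrder σ} {A B : Type*} [CommRing A] [CommRing B]

theorem isUnit_leadingCoeff_map {f : MvPolynomial σ A} (hf : IsUnit (m.leadingCoeff f))
    (φ : A →+* B) : IsUnit (m.leadingCoeff (map φ f)) := by
  nontriviality B
  have hcoeff : coeff (m.degree f) (map φ f) = φ (m.leadingCoeff f) := coeff_map φ f _
  have hle : m.degree (map φ f) ≼[m] m.degree f :=
    m.degree_le_iff.mpr fun e he => m.le_degree (support_map_subset _ _ he)
  have hge : m.degree f ≼[m] m.degree (map φ f) :=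
    m.le_degree (mem_support_iff.mpr (hcoeff ▸ (hf.map φ).ne_zero))
  rw [MonomialOrder.leadingCoeff, m.toSyn.injective (hle.antisymm hge), hcoeff]
  exact hf.map φ

theorem leadingCoeff_dvd_coeff {f g : MvPolynomial σ B}
    (hf : m.leadingCoeff f ∈ nonZeroDivisors B) (hfg : f ∣ g) {w : σ →₀ ℕ}
    (hw : m.degree g ≼[m] w) :
    m.leadingCoeff f ∣ coeff w g ∧ (coeff w g ≠ 0 → m.degree f ≤ w) := by
  rcases eq_or_ne (coeff w g) 0 with h0 | h0
  · simp [h0]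
  obtain rfl : m.degree g = w :=
    m.toSyn.injective (hw.antisymm (m.le_degree (mem_support_iff.mpr h0)))
  obtain ⟨h, rfl⟩ := hfg
  have hh : h ≠ 0 := by rintro rfl; simp at h0
  refine ⟨⟨m.leadingCoeff h, m.leadingCoeff_mul_of_left_mem_nonZeroDivisors hf⟩, fun _ => ?_⟩
  exact m.degree_mul_of_left_mem_nonZeroDivisors hf hh ▸ le_self_add

theorem dvd_of_dvd_C_mul {t : B} (ht : t ∈ nonZeroDivisors B) {f₀ f₁ g : MvPolynomial σ B}
    (hf₁ : IsUnit (m.leadingCoeff f₁)) (h : C t * f₀ + f₁ ∣ C t * g) : C t * f₀ + f₁ ∣ g := by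
  obtain ⟨q, hq⟩ := h
  let φ := Ideal.Quotient.mk (Ideal.span {t})
  have C_dvd_iff (p : MvPolynomial σ B) : C t ∣ p ↔ map φ p = 0 :=
    C_dvd_iff_map_hom_eq_zero φ t (fun r => by
      rw [Ideal.Quotient.eq_zero_iff_mem, Ideal.mem_span_singleton]) p
  have hφt : φ t = 0 := Ideal.Quotient.eq_zero_iff_mem.mpr (Ideal.mem_span_singleton_self t)
  obtain ⟨q, rfl⟩ : C t ∣ q := by
    rw [C_dvd_iff]
    have hzero : map φ f₁ * map φ q = 0 := by simpa [hφt] using (congrArg (map φ) hq).symm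
    exact (mem_nonZeroDivisors_iff.mp (m.mem_nonZeroDivisors_of_leadingCoeff_mem_nonZeroDivisors
      (isUnit_leadingCoeff_map hf₁ φ).mem_nonZeroDivisors)).1 _ hzero
  have hCt : C t ∈ nonZeroDivisors (MvPolynomial σ B) :=
    m.mem_nonZeroDivisors_of_leadingCoeff_mem_nonZeroDivisors (by rwa [m.leadingCoeff_C])
  exact ⟨q, mul_cancel_left_mem_nonZeroDivisors hCt |>.mp (by rw [hq, mul_left_comm])⟩

theorem mk_mem_nonZeroDivisors_iff {I : Ideal A} {x : A} :
    Ideal.Quotient.mk I x ∈ nonZeroDivisors (A ⧸ I) ↔ ∀ y, x * y ∈ I → y ∈ I := by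
  simp only [mem_nonZeroDivisors_iff_left, Ideal.Quotient.mk_surjective.forall, ← map_mul,
    Ideal.Quotient.eq_zero_iff_mem]

theorem mk_C_mem_nonZeroDivisors {t : B} (ht : t ∈ nonZeroDivisors B) (f₀ : MvPolynomial σ B)
    {f₁ : MvPolynomial σ B} (hf₁ : IsUnit (m.leadingCoeff f₁)) (n : ℕ) :
    Ideal.Quotient.mk (blockIdeal (C t * f₀ + f₁) n) (C t) ∈ nonZeroDivisors _ := by
  induction n with
  | zero =>
    refine mk_mem_nonZeroDivisors_iff.mpr fun g hg => ?_
    simp only [blockIdeal, Set.range_eq_empty, Ideal.span_empty, Ideal.mem_bot] at hg ⊢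
    ext d
    exact (mem_nonZeroDivisors_iff.mp ht).1 _ (by rw [← coeff_C_mul, hg, coeff_zero])
  | succ n ih =>
    refine mk_mem_nonZeroDivisors_iff.mpr fun g hg => ?_
    rw [mem_blockIdeal_succ_iff] at hg ⊢
    have hC : splitBlock σ B n (C t) = C (C t) := by
      rw [← algebraMap_eq, AlgEquiv.commutes]; rfl
    simp only [map_add, map_mul, map_C, hC, RingHom.comp_apply] at hg ⊢
    exact dvd_of_dvd_C_mul ih (isUnit_leadingCoeff_map hf₁ _) hg

theorem mem_blockIdeal_of_map_mem {L : Type*} [CommRing L] [Algebra B L] {S : Submonoid B}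
    [IsLocalization S L] {n : ℕ} {f : MvPolynomial σ B} {g : MvPolynomial (σ × Fin n) B}
    (hS : ∀ s ∈ S, Ideal.Quotient.mk (blockIdeal f n) (C s) ∈ nonZeroDivisors _)
    (hg : map (algebraMap B L) g ∈ blockIdeal (map (algebraMap B L) f) n) :
    g ∈ blockIdeal f n := by
  let _ : Algebra (MvPolynomial (σ × Fin n) B) (MvPolynomial (σ × Fin n) L) :=
    algebraMvPolynomial
  have : IsLocalization (S.map C) (MvPolynomial (σ × Fin n) L) := isLocalization S L
  rw [← map_blockIdeal] at hg
  obtain ⟨_, ⟨s, hs, rfl⟩, hsg⟩ :=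
    (IsLocalization.algebraMap_mem_map_algebraMap_iff (S.map C) _ _ _).mp hg
  exact mk_mem_nonZeroDivisors_iff.mp (hS s hs) g hsg

end MonomialOrder

section LinearSystem

variable {σ K ι L : Type*} [CommRing K] [CommRing L] [Algebra K L] {ℓ : ℕ}

/-- The linear combination `∑ i, lam i • F i`, with coefficients in a `K`-algebra `L`. -/
noncomputable def linComb [Fintype ι] (F : ι → MvPolynomial σ K) (lam : ι → L) :
    MvPolynomial σ L :=
  ∑ i, C (lam i) * map (algebraMap K L) (F i)

theorem map_linComb [Fintype ι] {M : Type*} [CommRing M] [Algebra K M] (ψ : L →ₐ[K] M)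
    (F : ι → MvPolynomial σ K) (lam : ι → L) :
    map (ψ : L →+* M) (linComb F lam) = linComb F (ψ ∘ lam) := by
  simp [linComb, map_map, ψ.comp_algebraMap]

theorem linComb_succ (F : Fin (ℓ + 1) → MvPolynomial σ K) (lam : Fin (ℓ + 1) → L) :
    linComb F lam =
      C (lam 0) * map (algebraMap K L) (F 0) + linComb (Fin.tail F) (Fin.tail lam) :=
  Fin.sum_univ_succ _

end LinearSystem

section Echelon

variable {σ K L : Type*} [Field K] [CommRing L] [Algebra K L] {ℓ n : ℕ}

/-- The `F i` are nonzero with strictly decreasing leading monomials. -/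
structure IsEchelon (m : MonomialOrder σ) (F : Fin ℓ → MvPolynomial σ K) : Prop where
  ne_zero i : F i ≠ 0
  strictAnti : StrictAnti fun i => m.toSyn (m.degree (F i))

variable {m : MonomialOrder σ} {F : Fin (ℓ + 1) → MvPolynomial σ K}

theorem IsEchelon.tail (hF : IsEchelon m F) : IsEchelon m (Fin.tail F) :=
  ⟨fun i => hF.ne_zero i.succ, hF.strictAnti.comp_strictMono (Fin.strictMono_succ)⟩

theorem IsEchelon.isUnit_algebraMap_leadingCoeff (hF : IsEchelon m F) (i : Fin (ℓ + 1)) :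
    IsUnit (algebraMap K L (m.leadingCoeff (F i))) :=
  (isUnit_iff_ne_zero.mpr (m.leadingCoeff_ne_zero_iff.mpr (hF.ne_zero i))).map _

theorem IsEchelon.coeff_degree_linComb (hF : IsEchelon m F) (lam : Fin (ℓ + 1) → L) :
    coeff (m.degree (F 0)) (linComb F lam) =
      lam 0 * algebraMap K L (m.leadingCoeff (F 0)) := by
  rw [linComb, coeff_sum, Finset.sum_eq_single_of_mem 0 (Finset.mem_univ _), coeff_C_mul,
    coeff_map, MonomialOrder.leadingCoeff]
  intro i _ hi
  rw [coeff_C_mul, coeff_map, m.coeff_eq_zero_of_lt (hF.strictAnti (Fin.pos_of_ne_zero hi)),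
    map_zero, mul_zero]

theorem IsEchelon.degree_linComb_le (hF : IsEchelon m F) (lam : Fin (ℓ + 1) → L) :
    m.degree (linComb F lam) ≼[m] m.degree (F 0) := by
  refine m.degree_le_iff.mpr fun e he => ?_
  contrapose! he
  simp only [linComb, notMem_support_iff, coeff_sum, coeff_C_mul, coeff_map]
  refine Finset.sum_eq_zero fun i _ => ?_
  rw [m.coeff_eq_zero_of_lt ((hF.strictAnti.antitone (Fin.zero_le i)).trans_lt he), map_zero,
    mul_zero]

theorem IsEchelon.degree_linComb (hF : IsEchelon m F) {lam : Fin (ℓ + 1) → L} (h0 : lam 0 ≠ 0) :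
    m.degree (linComb F lam) = m.degree (F 0) := by
  refine m.toSyn.injective ((hF.degree_linComb_le lam).antisymm (m.le_degree ?_))
  rwa [mem_support_iff, hF.coeff_degree_linComb, Ne,
    (hF.isUnit_algebraMap_leadingCoeff 0).mul_left_eq_zero]

theorem IsEchelon.leadingCoeff_linComb (hF : IsEchelon m F) {lam : Fin (ℓ + 1) → L}
    (h0 : lam 0 ≠ 0) :
    m.leadingCoeff (linComb F lam) = lam 0 * algebraMap K L (m.leadingCoeff (F 0)) := by
  rw [MonomialOrder.leadingCoeff, hF.degree_linComb h0, hF.coeff_degree_linComb]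

theorem IsEchelon.dvd_coeff_of_linComb_dvd (hF : IsEchelon m F) {lam : Fin (ℓ + 1) → L}
    (h0 : lam 0 ∈ nonZeroDivisors L) {g : MvPolynomial σ L} (hg : linComb F lam ∣ g)
    {w : σ →₀ ℕ} (hw : m.degree g ≼[m] w) :
    lam 0 ∣ coeff w g ∧ (coeff w g ≠ 0 → m.degree (F 0) ≤ w) := by
  nontriviality L
  have hdeg := hF.degree_linComb (nonZeroDivisors.ne_zero h0)
  have hlc := hF.leadingCoeff_linComb (nonZeroDivisors.ne_zero h0)
  have := leadingCoeff_dvd_coeff (m := m) (hlc ▸ mul_mem h0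
    (hF.isUnit_algebraMap_leadingCoeff 0).mem_nonZeroDivisors) hg hw
  rw [hdeg, hlc, (hF.isUnit_algebraMap_leadingCoeff 0).mul_right_dvd] at this
  exact this

theorem IsEchelon.map_coeff_mem (hF : IsEchelon m F) {lam : Fin (ℓ + 1) → L}
    (h0 : Ideal.Quotient.mk (blockIdeal (linComb F lam) n) (C (lam 0)) ∈ nonZeroDivisors _)
    {g : MvPolynomial (σ × Fin (n + 1)) K}
    (hg : map (algebraMap K L) g ∈ blockIdeal (linComb F lam) (n + 1))
    {w : σ →₀ ℕ} (hw : m.degree (splitBlock σ K n g) ≼[m] w) :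
    map (algebraMap K L) (coeff w (splitBlock σ K n g)) ∈
        blockIdeal (linComb F lam) n ⊔ Ideal.span {C (lam 0)} ∧
      (¬ m.degree (F 0) ≤ w → map (algebraMap K L) (coeff w (splitBlock σ K n g)) ∈
        blockIdeal (linComb F lam) n) := by
  set I := blockIdeal (linComb F lam) n
  let ψ : L →ₐ[K] MvPolynomial (σ × Fin n) L ⧸ I :=
    (Ideal.Quotient.mkₐ K I).comp (IsScalarTower.toAlgHom K L _)
  let φ := (Ideal.Quotient.mk I).comp (map (σ := σ × Fin n) (algebraMap K L))
  have hψ : linComb F (ψ ∘ lam) ∣ map φ (splitBlock σ K n g) := by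
    rw [← map_linComb, ← map_map, ← splitBlock_map]
    exact mem_blockIdeal_succ_iff.mp hg
  have hdeg : m.degree (map φ (splitBlock σ K n g)) ≼[m] w :=
    m.degree_le_iff.mpr fun e he => (m.le_degree (support_map_subset φ _ he)).trans hw
  have hcoeff : coeff w (map φ (splitBlock σ K n g)) =
    Ideal.Quotient.mk I (map (algebraMap K L) (coeff w (splitBlock σ K n g))) := coeff_map _ _ _
  have h0' : (ψ ∘ lam) 0 = Ideal.Quotient.mk I (C (lam 0)) := rfl
  obtain ⟨hdvd, hzero⟩ := hF.dvd_coeff_of_linComb_dvd (h0' ▸ h0) hψ hdeg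
  rw [hcoeff, h0'] at hdvd
  rw [hcoeff, Ne, Ideal.Quotient.eq_zero_iff_mem] at hzero
  refine ⟨?_, not_imp_comm.mp hzero⟩
  rwa [sup_comm, ← Ideal.mem_quotient_iff_mem_sup, Ideal.map_span, Set.image_singleton,
    Ideal.mem_span_singleton]

end Echelon

section Generic

variable {σ K ι : Type*} [Field K] {ℓ n : ℕ}

theorem map_mem_map_iff {L : Type*} [Field L] [Algebra K L] {I : Ideal (MvPolynomial σ K)}
    {g : MvPolynomial σ K} : map (algebraMap K L) g ∈ I.map (map (algebraMap K L)) ↔ g ∈ I := by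
  let _ : Algebra (MvPolynomial σ K) (MvPolynomial σ L) := algebraMvPolynomial
  have h : IsBaseChange (MvPolynomial σ K)
      (IsScalarTower.toAlgHom K L (MvPolynomial σ L)).toLinearMap := Algebra.IsPushout.out
  have : Module.Free (MvPolynomial σ K) (MvPolynomial σ L) := h.free
  exact SetLike.ext_iff.mp
    (Ideal.comap_map_eq_self_of_faithfullyFlat (B := MvPolynomial σ L) I) g

/-- The coefficients of the generic linear combination of a family indexed by `ι`: independent
indeterminates over `K`. -/
noncomputable def genericCoeff (K ι : Type*) [Field K] : ι → FractionRing (MvPolynomial ι K) :=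
  fun i => algebraMap (MvPolynomial ι K) _ (X i)

theorem algebraicIndependent_genericCoeff : AlgebraicIndependent K (genericCoeff K ι) :=
  (algebraicIndependent_X ι K).map' (f := IsScalarTower.toAlgHom K _ _)
    (IsFractionRing.injective (MvPolynomial ι K) _)

variable [Fintype ι]

/-- The ideal of polynomials in `n` points that vanish whenever all of the points lie on the
generic member of the linear system spanned by the `F i`. -/
noncomputable def genericIdeal (F : ι → MvPolynomial σ K) (n : ℕ) :
    Ideal (MvPolynomial (σ × Fin n) K) :=
  (blockIdeal (linComb F (genericCoeff K ι)) n).comap (map (algebraMap K _))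

theorem mem_genericIdeal_iff {L : Type*} [Field L] [Algebra K L] {F : ι → MvPolynomial σ K}
    {lam : ι → L} (hlam : AlgebraicIndependent K lam) {g : MvPolynomial (σ × Fin n) K} :
    g ∈ genericIdeal F n ↔ map (algebraMap K L) g ∈ blockIdeal (linComb F lam) n := by
  let ψ : FractionRing (MvPolynomial ι K) →ₐ[K] L := IsFractionRing.liftAlgHom hlam
  have hψ : ψ ∘ genericCoeff K ι = lam := by
    ext i
    exact (IsFractionRing.lift_algebraMap hlam (X i)).trans (aeval_X lam i)
  let _ : Algebra (FractionRing (MvPolynomial ι K)) L := ψ.toRingHom.toAlgebra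
  rw [genericIdeal, Ideal.mem_comap, ← map_mem_map_iff (L := L), map_blockIdeal, map_map]
  have hφ : (algebraMap (FractionRing (MvPolynomial ι K)) L : _ →+* L) = (ψ : _ →+* L) := rfl
  rw [hφ, map_linComb, hψ, ψ.comp_algebraMap]

theorem algebraicIndependent_cons_X {κ : Type*} [Field κ] [Algebra K κ] {lam : Fin ℓ → κ}
    (hlam : AlgebraicIndependent K lam) :
    AlgebraicIndependent K (Fin.cons PowerSeries.X (PowerSeries.C ∘ lam) :
      Fin (ℓ + 1) → PowerSeries κ) := by
  have hfac : aeval (Fin.cons PowerSeries.X (PowerSeries.C ∘ lam) : Fin (ℓ + 1) → PowerSeries κ) =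
      ((Polynomial.coeToPowerSeries.algHom κ).restrictScalars K).comp
        ((Polynomial.mapAlgHom (aeval lam)).comp (finSuccEquiv K ℓ).toAlgHom) := by
    ext i
    cases i using Fin.cases <;> simp [finSuccEquiv_X_zero, finSuccEquiv_X_succ]
  have hcoe : Function.Injective (Polynomial.coeToPowerSeries.algHom (R := κ) κ) := fun p q h =>
    Polynomial.coe_injective κ (by simpa using h)
  rw [AlgebraicIndependent, hfac]
  exact hcoe.comp ((Polynomial.map_injective _ hlam).comp (finSuccEquiv K ℓ).injective)

theorem IsEchelon.coeff_mem_genericIdeal {m : MonomialOrder σ} {F : Fin (ℓ + 1) → MvPolynomial σ K}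
    (hF : IsEchelon m F) {g : MvPolynomial (σ × Fin (n + 1)) K}
    (hg : g ∈ genericIdeal F (n + 1)) {w : σ →₀ ℕ}
    (hw : m.degree (splitBlock σ K n g) ≼[m] w) (hFw : ¬ m.degree (F 0) ≤ w) :
    coeff w (splitBlock σ K n g) ∈ genericIdeal F n := by
  have h0 : genericCoeff K (Fin (ℓ + 1)) 0 ≠ 0 := algebraicIndependent_genericCoeff.ne_zero 0
  have hunit := ((isUnit_iff_ne_zero.mpr h0).map C).map
    (Ideal.Quotient.mk (blockIdeal (linComb F (genericCoeff K _)) n))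
  exact (hF.map_coeff_mem hunit.mem_nonZeroDivisors hg hw).2 hFw

theorem IsEchelon.mk_C_X_mem_nonZeroDivisors {κ : Type*} [Field κ] [Algebra K κ]
    {m : MonomialOrder σ} {F : Fin (ℓ + 2) → MvPolynomial σ K} (hF : IsEchelon m F)
    {lam : Fin (ℓ + 1) → κ} (h0 : lam 0 ≠ 0) :
    Ideal.Quotient.mk (blockIdeal (linComb F (Fin.cons PowerSeries.X (PowerSeries.C ∘ lam) :
      Fin (ℓ + 2) → PowerSeries κ)) n) (C PowerSeries.X) ∈ nonZeroDivisors _ := by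
  rw [linComb_succ]
  refine mk_C_mem_nonZeroDivisors (m := m)
    (mem_nonZeroDivisors_of_ne_zero PowerSeries.X_ne_zero) _ ?_ n
  have hunit := (isUnit_iff_ne_zero.mpr h0).map (PowerSeries.C (R := κ))
  rw [hF.tail.leadingCoeff_linComb hunit.ne_zero]
  exact hunit.mul (hF.tail.isUnit_algebraMap_leadingCoeff 0)

theorem map_mem_blockIdeal_of_mem_genericIdeal {O L : Type*} [CommRing O] [Algebra K O] [Field L]
    [Algebra O L] [FaithfulSMul O L] {S : Submonoid O} [IsLocalization S L]
    {F : ι → MvPolynomial σ K} {lam : ι → O} (hlam : AlgebraicIndependent K lam)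
    (hS : ∀ s ∈ S, Ideal.Quotient.mk (blockIdeal (linComb F lam) n) (C s) ∈ nonZeroDivisors _)
    {g : MvPolynomial (σ × Fin n) K} (hg : g ∈ genericIdeal F n) :
    map (algebraMap K O) g ∈ blockIdeal (linComb F lam) n := by
  let _ : Algebra K L := ((algebraMap O L).comp (algebraMap K O)).toAlgebra
  have : IsScalarTower K O L := .of_algebraMap_eq' rfl
  let ψ : O →ₐ[K] L := IsScalarTower.toAlgHom K O L
  have hgL := (mem_genericIdeal_iff (hlam.map' (f := ψ) (FaithfulSMul.algebraMap_injective O L))).mp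
    hg
  rw [← map_linComb, IsScalarTower.algebraMap_eq K O, ← map_map] at hgL
  exact mem_blockIdeal_of_map_mem hS hgL

theorem IsEchelon.coeff_mem_genericIdeal_tail {m : MonomialOrder σ}
    {F : Fin (ℓ + 2) → MvPolynomial σ K} (hF : IsEchelon m F)
    {g : MvPolynomial (σ × Fin (n + 1)) K} (hg : g ∈ genericIdeal F (n + 1)) {w : σ →₀ ℕ}
    (hw : m.degree (splitBlock σ K n g) ≼[m] w) :
    coeff w (splitBlock σ K n g) ∈ genericIdeal (Fin.tail F) n := by
  let κ := FractionRing (MvPolynomial (Fin (ℓ + 1)) K)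
  let μ : Fin (ℓ + 1) → κ := genericCoeff K _
  have hμ : AlgebraicIndependent K μ := algebraicIndependent_genericCoeff
  let lam : Fin (ℓ + 2) → PowerSeries κ := Fin.cons PowerSeries.X (PowerSeries.C ∘ μ)
  -- As `X` is regular modulo the block ideal, membership descends from `κ((X))` to `κ⟦X⟧`, where
  -- `X` can be set to `0`.
  have hX (n) : Ideal.Quotient.mk (blockIdeal (linComb F lam) n) (C PowerSeries.X) ∈
    nonZeroDivisors _ := hF.mk_C_X_mem_nonZeroDivisors (hμ.ne_zero 0)
  have hgO : map (algebraMap K (PowerSeries κ)) g ∈ blockIdeal (linComb F lam) (n + 1) := by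
    refine map_mem_blockIdeal_of_mem_genericIdeal (L := LaurentSeries κ)
      (S := .powers PowerSeries.X) (algebraicIndependent_cons_X hμ) ?_ hg
    rintro _ ⟨e, rfl⟩
    simpa only [map_pow] using pow_mem (hX (n + 1)) e
  let ψ : PowerSeries κ →ₐ[K] κ :=
    { PowerSeries.constantCoeff (R := κ) with
      commutes' := fun c => by simp [PowerSeries.algebraMap_apply] }
  have hψ : map (ψ : PowerSeries κ →+* κ) (linComb F lam) = linComb (Fin.tail F) μ := by
    have h0 : (ψ ∘ lam) 0 = 0 := PowerSeries.constantCoeff_X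
    have htail : Fin.tail (ψ ∘ lam) = μ := funext fun i => PowerSeries.constantCoeff_C (μ i)
    rw [map_linComb, linComb_succ, h0, htail, C_0, zero_mul, zero_add]
  have h := Ideal.mem_map_of_mem (map (ψ : PowerSeries κ →+* κ)) (hF.map_coeff_mem (hX n) hgO hw).1
  have h0 : map (ψ : PowerSeries κ →+* κ) (C (lam 0) : MvPolynomial (σ × Fin n) _) = 0 := by
    rw [map_C]; exact congrArg C PowerSeries.constantCoeff_X |>.trans C_0
  rwa [Ideal.map_sup, map_blockIdeal, hψ, Ideal.map_span, Set.image_singleton, h0,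
    Ideal.span_singleton_zero, sup_bot_eq, map_map, ψ.comp_algebraMap] at h

end Generic

section Prime

variable {σ K ι : Type*} [Field K] [Fintype ι] {n : ℕ}

/-- A general member of the linear system spanned by the `F i` is irreducible: `∑ i, lam i • F i`
is, for all `lam` outside a hypersurface. -/
def GenerallyIrreducible (F : ι → MvPolynomial σ K) : Prop :=
  ∃ p : MvPolynomial ι K, p ≠ 0 ∧
    ∀ lam : ι → K, eval lam p ≠ 0 → Irreducible (∑ i, C (lam i) * F i)

theorem GenerallyIrreducible.irreducible_linComb [IsAlgClosed K] {F : ι → MvPolynomial σ K}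
    (hF : GenerallyIrreducible F) {L : Type*} [Field L] [Algebra K L] {lam : ι → L}
    (hlam : AlgebraicIndependent K lam) : Irreducible (linComb F lam) := by
  obtain ⟨p, hp, hirr⟩ := hF
  let _ : Algebra (MvPolynomial ι K) L := (aeval lam).toRingHom.toAlgebra
  have : IsScalarTower K (MvPolynomial ι K) L :=
    .of_algebraMap_eq fun c => ((aeval lam).commutes c).symm
  have : FaithfulSMul (MvPolynomial ι K) L := (faithfulSMul_iff_algebraMap_injective _ _).mpr hlam
  have hlin : linComb F lam = map (algebraMap (MvPolynomial ι K) L) (linComb F X) :=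
    .symm <| (map_linComb (aeval lam) F X).trans <| congrArg _ <| funext <| aeval_X lam
  rw [hlin]
  refine irreducible_map_of_forall_algHom (K := K) hp fun ψ hψ => ?_
  rw [aeval_unique ψ, aeval_eq_eval] at hψ
  rw [map_linComb]
  simpa only [linComb, Algebra.algebraMap_self, map_id] using hirr _ hψ

theorem genericIdeal_isPrime [IsAlgClosed K] [Finite σ] {F : ι → MvPolynomial σ K}
    (hF : GenerallyIrreducible F) (n : ℕ) : (genericIdeal F n).IsPrime := by
  let Ω := AlgebraicClosure (FractionRing (MvPolynomial ι K))
  have hlam : AlgebraicIndependent K fun i => algebraMap _ Ω (genericCoeff K ι i) :=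
    algebraicIndependent_genericCoeff.map' (f := IsScalarTower.toAlgHom K _ Ω)
      (algebraMap (FractionRing (MvPolynomial ι K)) Ω).injective
  have hcomap : genericIdeal F n = (blockIdeal (linComb F _) n).comap (map (algebraMap K Ω)) :=
    Ideal.ext fun g => mem_genericIdeal_iff hlam
  have := blockIdeal_isPrime (hF.irreducible_linComb hlam) n
  exact hcomap ▸ Ideal.comap_isPrime _ _

end Prime

section LeadingCoeffIdeal

variable {σ B : Type*} [CommRing B] {m : MonomialOrder σ} {I J : Ideal (MvPolynomial σ B)}

/-- The ideal of coefficients of the monomial `w` in the elements of `I` of degree at most `w`: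
the leading coefficients of the elements of `I` of degree exactly `w`, together with `0`. -/
def leadingCoeffIdeal (m : MonomialOrder σ) (I : Ideal (MvPolynomial σ B)) (w : σ →₀ ℕ) :
    Ideal B where
  carrier := {b | ∃ g ∈ I, m.degree g ≼[m] w ∧ coeff w g = b}
  zero_mem' := ⟨0, I.zero_mem, by simp, rfl⟩
  add_mem' := by
    rintro _ _ ⟨g, hg, hgw, rfl⟩ ⟨h, hh, hhw, rfl⟩
    exact ⟨g + h, I.add_mem hg hh, m.degree_add_le.trans (sup_le hgw hhw), coeff_add _ _ _⟩
  smul_mem' := by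
    rintro b _ ⟨g, hg, hgw, rfl⟩
    exact ⟨b • g, I.smul_of_tower_mem b hg, m.degree_smul_le.trans hgw, coeff_smul _ _ _⟩

theorem coeff_mem_leadingCoeffIdeal {g : MvPolynomial σ B} (hg : g ∈ I) {w : σ →₀ ℕ}
    (hw : m.degree g ≼[m] w) : coeff w g ∈ leadingCoeffIdeal m I w :=
  ⟨g, hg, hw, rfl⟩

theorem le_leadingCoeffIdeal_of_map_C_le {I₀ : Ideal B} (h : I₀.map C ≤ I) (w : σ →₀ ℕ) :
    I₀ ≤ leadingCoeffIdeal m I w := fun b hb => by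
  classical
  refine ⟨C b * monomial w 1, I.mul_mem_right _ (h (Ideal.mem_map_of_mem C hb)), ?_, ?_⟩
  · rw [C_mul_monomial]
    exact m.degree_monomial_le _
  · rw [coeff_C_mul, coeff_monomial, if_pos rfl, mul_one]

theorem leadingCoeffIdeal_mono {v w : σ →₀ ℕ} (h : v ≤ w) :
    leadingCoeffIdeal m I v ≤ leadingCoeffIdeal m I w := by
  rintro _ ⟨g, hg, hgv, rfl⟩
  refine ⟨monomial (w - v) 1 * g, I.mul_mem_left _ hg, ?_, ?_⟩
  · calc m.toSyn (m.degree (monomial (w - v) 1 * g))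
        ≤ m.toSyn (m.degree (monomial (w - v) (1 : B)) + m.degree g) := m.degree_mul_le
      _ ≤ m.toSyn ((w - v) + v) := by
        rw [map_add, map_add]
        exact add_le_add (m.degree_monomial_le _) hgv
      _ = m.toSyn w := by rw [tsub_add_cancel_of_le h]
  · have hcoeff := coeff_monomial_mul v (w - v) (1 : B) g
    rwa [tsub_add_cancel_of_le h, one_mul] at hcoeff

theorem le_of_leadingCoeffIdeal_le (hIJ : I ≤ J)
    (h : ∀ w, leadingCoeffIdeal m J w ≤ leadingCoeffIdeal m I w) : J ≤ I := by
  suffices ∀ s : m.syn, ∀ g ∈ J, m.toSyn (m.degree g) = s → g ∈ I from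
    fun g hg => this _ g hg rfl
  intro s
  induction s using WellFoundedLT.induction with
  | _ s ih =>
    rintro g hg rfl
    obtain ⟨g', hg', hdeg, hcoeff⟩ := h _ (coeff_mem_leadingCoeffIdeal hg le_rfl)
    rw [← sub_add_cancel g g']
    refine I.add_mem ?_ hg'
    by_cases h0 : g - g' = 0
    · exact h0 ▸ I.zero_mem
    refine ih _ (lt_of_le_of_ne (m.degree_sub_le.trans (sup_le le_rfl hdeg)) fun heq => ?_) _
      (J.sub_mem hg (hIJ hg')) rfl
    apply m.leadingCoeff_ne_zero_iff.mpr h0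
    rw [MonomialOrder.leadingCoeff, m.toSyn.injective heq, coeff_sub, hcoeff, sub_self]

end LeadingCoeffIdeal

section Minors

variable {ι κ κ' S T : Type*} [Fintype ι] [DecidableEq ι] [CommRing S] [CommRing T]

/-- The ideal of maximal minors of a matrix with at most as many rows as columns. Columns are
chosen in any order, which affects the minors only by signs. -/
def minorsIdeal (A : Matrix ι κ S) : Ideal S :=
  Ideal.span {d | ∃ g : ι → κ, Function.Injective g ∧ d = (A.submatrix id g).det}

theorem det_submatrix_mem_minorsIdeal (A : Matrix ι κ S) (g : ι → κ) :
    (A.submatrix id g).det ∈ minorsIdeal A := by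
  by_cases hg : Function.Injective g
  · exact Ideal.subset_span ⟨g, hg, rfl⟩
  · obtain ⟨a, b, hab, hne⟩ := Function.not_injective_iff.mp hg
    rw [Matrix.det_zero_of_column_eq hne fun i => congrArg (A i) hab]
    exact zero_mem _

theorem minorsIdeal_le_iff {A : Matrix ι κ S} {J : Ideal S} :
    minorsIdeal A ≤ J ↔ ∀ g : ι → κ, (A.submatrix id g).det ∈ J := by
  refine ⟨fun h g => h (det_submatrix_mem_minorsIdeal A g), fun h => Ideal.span_le.mpr ?_⟩
  rintro _ ⟨g, -, rfl⟩
  exact h g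

theorem minorsIdeal_eq_top [IsEmpty ι] (A : Matrix ι κ S) : minorsIdeal A = ⊤ := by
  rw [Ideal.eq_top_iff_one, ← Matrix.det_isEmpty (A := A.submatrix id isEmptyElim)]
  exact det_submatrix_mem_minorsIdeal A _

theorem minorsIdeal_eq_bot [Fintype κ] (h : Fintype.card κ < Fintype.card ι) (A : Matrix ι κ S) :
    minorsIdeal A = ⊥ := by
  rw [minorsIdeal, Ideal.span_eq_bot]
  rintro _ ⟨g, hg, -⟩
  exact absurd (Fintype.card_le_of_injective g hg) h.not_ge

theorem minorsIdeal_submatrix_le (A : Matrix ι κ S) (r : κ' → κ) :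
    minorsIdeal (A.submatrix id r) ≤ minorsIdeal A :=
  minorsIdeal_le_iff.mpr fun g => det_submatrix_mem_minorsIdeal A (r ∘ g)

theorem map_minorsIdeal (f : S →+* T) (A : Matrix ι κ S) :
    (minorsIdeal A).map f = minorsIdeal (A.map f) := by
  rw [minorsIdeal, minorsIdeal, Ideal.map_span]
  have hdet (g : ι → κ) : f (A.submatrix id g).det = ((A.map f).submatrix id g).det := f.map_det _
  congr 1
  ext d
  constructor
  · rintro ⟨_, ⟨g, hg, rfl⟩, rfl⟩
    exact ⟨g, hg, hdet g⟩
  · rintro ⟨g, hg, rfl⟩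
    exact ⟨_, ⟨g, hg, rfl⟩, hdet g⟩

theorem minorsIdeal_mul_le (U : Matrix ι ι S) (A : Matrix ι κ S) :
    minorsIdeal (U * A) ≤ minorsIdeal A := by
  refine minorsIdeal_le_iff.mpr fun g => ?_
  rw [Matrix.submatrix_mul U A id id g Function.bijective_id, Matrix.submatrix_id_id,
    Matrix.det_mul]
  exact Ideal.mul_mem_left _ _ (det_submatrix_mem_minorsIdeal A g)

theorem minorsIdeal_mul {U : Matrix ι ι S} (hU : IsUnit U) (A : Matrix ι κ S) :
    minorsIdeal (U * A) = minorsIdeal A := by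
  refine (minorsIdeal_mul_le U A).antisymm ?_
  obtain ⟨U, rfl⟩ := hU
  simpa only [← Matrix.mul_assoc, U.inv_mul, Matrix.one_mul] using
    minorsIdeal_mul_le (U⁻¹).val (U.val * A)

theorem mul_det_mem_of_vecMul_mem {I : Ideal S} {N : Matrix ι ι S} {c : ι → S}
    (h : ∀ j, Matrix.vecMul c N j ∈ I) (i : ι) : c i * N.det ∈ I := by
  have hcramer : Matrix.vecMul (Matrix.vecMul c N) N.adjugate = N.det • c := by
    rw [Matrix.vecMul_vecMul, Matrix.mul_adjugate, Matrix.vecMul_smul, Matrix.vecMul_one]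
  rw [mul_comm, ← smul_eq_mul, ← Pi.smul_apply, ← hcramer]
  exact I.sum_mem fun j _ => I.mul_mem_right _ (h j)

end Minors

section PointMatrix

variable {σ ι R : Type*} [CommRing R] {ℓ n n' : ℕ}

/-- The matrix of the values `F_i(x_j)` at `n` generic points `x_j`. -/
noncomputable def pointMatrix (F : ι → MvPolynomial σ R) (n : ℕ) :
    Matrix ι (Fin n) (MvPolynomial (σ × Fin n) R) :=
  Matrix.of fun i j => rename (·, j) (F i)

theorem map_rename_pointMatrix (F : ι → MvPolynomial σ R) (r : Fin n → Fin n') :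
    (pointMatrix F n).map (rename (Prod.map id r)) = (pointMatrix F n').submatrix id r := by
  ext1 i j
  exact rename_rename _ _ _

theorem map_rename_minorsIdeal_le [Fintype ι] [DecidableEq ι] (F : ι → MvPolynomial σ R)
    (r : Fin n → Fin n') :
    (minorsIdeal (pointMatrix F n)).map (rename (R := R) (Prod.map (id : σ → σ) r)) ≤
      minorsIdeal (pointMatrix F n') := by
  have h := map_minorsIdeal (rename (Prod.map id r)).toRingHom (pointMatrix F n)
  have hmap : (pointMatrix F n).map (rename (Prod.map id r)).toRingHom = _ :=
    map_rename_pointMatrix F r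
  exact (h.trans (congrArg minorsIdeal hmap)).trans_le (minorsIdeal_submatrix_le _ r)

theorem map_C_minorsIdeal_le [Fintype ι] [DecidableEq ι] (F : ι → MvPolynomial σ R) (n : ℕ) :
    (minorsIdeal (pointMatrix F n)).map C ≤
      (minorsIdeal (pointMatrix F (n + 1))).map (splitBlock σ R n) := by
  rw [Ideal.map_le_iff_le_comap]
  intro a ha
  rw [Ideal.mem_comap, ← splitBlock_rename_succ]
  exact Ideal.mem_map_of_mem _ (map_rename_minorsIdeal_le F _ (Ideal.mem_map_of_mem _ ha))

theorem splitBlock_det_cons (F : Fin (ℓ + 1) → MvPolynomial σ R) (g : Fin ℓ → Fin n) :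
    splitBlock σ R n
        ((pointMatrix F (n + 1)).submatrix id (Fin.cons 0 (Fin.succ ∘ g) : Fin (ℓ + 1) → _)).det =
      linComb F fun i : Fin (ℓ + 1) =>
        (-1) ^ (i : ℕ) * ((pointMatrix F n).submatrix i.succAbove g).det := by
  rw [Matrix.det_succ_column_zero, map_sum]
  refine Finset.sum_congr rfl fun i _ => ?_
  have hminor : ((pointMatrix F (n + 1)).submatrix id (Fin.cons 0 (Fin.succ ∘ g) :
      Fin (ℓ + 1) → _)).submatrix i.succAbove Fin.succ =
        ((pointMatrix F n).submatrix i.succAbove g).map (rename (Prod.map id Fin.succ)) := by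
    rw [← Matrix.submatrix_map, map_rename_pointMatrix]
    rfl
  rw [hminor, ← AlgHom.mapMatrix_apply, ← AlgHom.map_det, map_mul, map_mul, splitBlock_rename_succ,
    Matrix.submatrix_apply, Fin.cons_zero, id, pointMatrix, Matrix.of_apply, splitBlock_rename_zero,
    algebraMap_eq, C_mul, map_pow, map_neg, map_one, map_pow, map_neg, map_one]
  exact mul_right_comm _ _ _

end PointMatrix

section Echelon

variable {σ K : Type*} [Field K] {ℓ n : ℕ}

theorem minorsIdeal_le_genericIdeal (F : Fin (ℓ + 1) → MvPolynomial σ K) (n : ℕ) :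
    minorsIdeal (pointMatrix F n) ≤ genericIdeal F n := by
  let L := FractionRing (MvPolynomial (Fin (ℓ + 1)) K)
  let lam : Fin (ℓ + 1) → L := genericCoeff K _
  have h0 : IsUnit (C (σ := σ × Fin n) (lam 0)) :=
    (isUnit_iff_ne_zero.mpr (algebraicIndependent_genericCoeff.ne_zero 0)).map C
  refine minorsIdeal_le_iff.mpr fun g => ?_
  rw [genericIdeal, Ideal.mem_comap, RingHom.map_det,
    ← Ideal.unit_mul_mem_iff_mem _ h0]
  refine mul_det_mem_of_vecMul_mem (c := fun i => C (lam i)) (fun j => ?_) 0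
  refine Ideal.subset_span ⟨g j, ?_⟩
  simp [linComb, pointMatrix, Matrix.vecMul, dotProduct, map_rename, lam]

variable {m : MonomialOrder σ}

theorem IsEchelon.coeff_splitBlock_det_cons {F : Fin (ℓ + 1) → MvPolynomial σ K}
    (hF : IsEchelon m F) (g : Fin ℓ → Fin n) :
    coeff (m.degree (F 0)) (splitBlock σ K n
      ((pointMatrix F (n + 1)).submatrix id (Fin.cons 0 (Fin.succ ∘ g) : Fin (ℓ + 1) → _)).det) =
      ((pointMatrix (Fin.tail F) n).submatrix id g).det *
        algebraMap K _ (m.leadingCoeff (F 0)) := by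
  rw [splitBlock_det_cons, hF.coeff_degree_linComb, Fin.val_zero, pow_zero, one_mul,
    Fin.succAbove_zero]
  rfl

theorem IsEchelon.minorsIdeal_tail_le {F : Fin (ℓ + 1) → MvPolynomial σ K} (hF : IsEchelon m F)
    {w : σ →₀ ℕ} (hw : m.degree (F 0) ≤ w) :
    minorsIdeal (pointMatrix (Fin.tail F) n) ≤ leadingCoeffIdeal m
      ((minorsIdeal (pointMatrix F (n + 1))).map (splitBlock σ K n)) w := by
  refine le_trans (minorsIdeal_le_iff.mpr fun g => ?_) (leadingCoeffIdeal_mono hw)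
  have hmem := Ideal.mem_map_of_mem (splitBlock σ K n) (det_submatrix_mem_minorsIdeal
    (pointMatrix F (n + 1)) (Fin.cons 0 (Fin.succ ∘ g) : Fin (ℓ + 1) → Fin (n + 1)))
  have hdeg := splitBlock_det_cons F g ▸ hF.degree_linComb_le _
  have h := coeff_mem_leadingCoeffIdeal hmem hdeg
  rwa [hF.coeff_splitBlock_det_cons,
    Ideal.mul_unit_mem_iff_mem _ (hF.isUnit_algebraMap_leadingCoeff 0)] at h

theorem IsEchelon.minorsIdeal_eq_genericIdeal {F : Fin (ℓ + 1) → MvPolynomial σ K}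
    (hF : IsEchelon m F) (n : ℕ) : minorsIdeal (pointMatrix F n) = genericIdeal F n := by
  induction n generalizing ℓ with
  | zero =>
    refine (minorsIdeal_le_genericIdeal F 0).antisymm fun g hg => ?_
    have h0 : map (algebraMap K (FractionRing (MvPolynomial (Fin (ℓ + 1)) K))) g = 0 := by
      simpa [genericIdeal, blockIdeal] using hg
    rw [(map_eq_zero_iff _ (map_injective _ (algebraMap K _).injective)).mp h0]
    exact zero_mem _
  | succ n ih =>
    refine (minorsIdeal_le_genericIdeal F _).antisymm fun g hg => ?_
    rw [← splitBlock_mem_map_iff]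
    refine le_of_leadingCoeffIdeal_le (m := m)
      (Ideal.map_mono (minorsIdeal_le_genericIdeal F (n + 1))) ?_ (splitBlock_mem_map_iff.mpr hg)
    rintro w _ ⟨g, hg, hgw, rfl⟩
    obtain ⟨g, rfl⟩ := (splitBlock σ K n).surjective g
    rw [splitBlock_mem_map_iff] at hg
    by_cases hw : m.degree (F 0) ≤ w
    · refine hF.minorsIdeal_tail_le hw ?_
      cases ℓ with
      | zero => exact minorsIdeal_eq_top (pointMatrix (Fin.tail F) n) ▸ Submodule.mem_top
      | succ ℓ => exact ih hF.tail ▸ hF.coeff_mem_genericIdeal_tail hg hgw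
    · refine le_leadingCoeffIdeal_of_map_C_le (map_C_minorsIdeal_le F n) w ?_
      exact ih hF ▸ hF.coeff_mem_genericIdeal hg hgw hw

end Echelon

section ChangeOfBasis

variable {σ K : Type*} [Field K] {m : MonomialOrder σ} {ℓ : ℕ}

theorem exists_minimal_degree (m : MonomialOrder σ) {V : Submodule K (MvPolynomial σ K)}
    (hV : V ≠ ⊥) : ∃ v ∈ V, v ≠ 0 ∧ ∀ u ∈ V, u ≠ 0 → m.degree v ≼[m] m.degree u := by
  obtain ⟨v, hv, hv0⟩ := V.exists_mem_ne_zero_of_ne_bot hV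
  obtain ⟨u, ⟨hu, hu0⟩, hmin⟩ := (InvImage.wf (fun u => m.toSyn (m.degree u))
    wellFounded_lt).has_min {u | u ∈ V ∧ u ≠ 0} ⟨v, hv, hv0⟩
  exact ⟨u, hu, hu0, fun u' hu' hu0' => not_lt.mp (hmin u' ⟨hu', hu0'⟩)⟩

theorem IsEchelon.snoc {F : Fin ℓ → MvPolynomial σ K} (hF : IsEchelon m F) {f : MvPolynomial σ K}
    (hf : f ≠ 0) (hlt : ∀ i, m.degree f ≺[m] m.degree (F i)) :
    IsEchelon m (Fin.snoc F f : Fin (ℓ + 1) → MvPolynomial σ K) where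
  ne_zero i := by
    cases i using Fin.lastCases with
    | last => simpa only [Fin.snoc_last]
    | cast i => simpa only [Fin.snoc_castSucc] using hF.ne_zero i
  strictAnti i j hij := by
    cases i using Fin.lastCases with
    | last => exact absurd hij (Fin.le_last j).not_gt
    | cast i =>
      cases j using Fin.lastCases with
      | last => simpa only [Fin.snoc_last, Fin.snoc_castSucc] using hlt i
      | cast j => simpa only [Fin.snoc_castSucc] using hF.strictAnti hij

theorem exists_isEchelon_mem (m : MonomialOrder σ) (V : Submodule K (MvPolynomial σ K))
    [FiniteDimensional K V] (hℓ : ℓ ≤ Module.finrank K V) :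
    ∃ G : Fin ℓ → MvPolynomial σ K, IsEchelon m G ∧ ∀ i, G i ∈ V := by
  induction ℓ generalizing V with
  | zero => exact ⟨Fin.elim0, ⟨fun i => i.elim0, fun i => i.elim0⟩, fun i => i.elim0⟩
  | succ ℓ ih =>
    have hV : V ≠ ⊥ := by
      rintro rfl
      simp at hℓ
    obtain ⟨v, hv, hv0, hmin⟩ := exists_minimal_degree m hV
    let c : V →ₗ[K] K := (lcoeff K (m.degree v)).comp V.subtype
    let W := (LinearMap.ker c).map V.subtype
    have hW : ℓ ≤ Module.finrank K W := by
      rw [Submodule.finrank_map_subtype_eq]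
      have hrank := c.finrank_range_add_finrank_ker
      have hrange := (LinearMap.range c).finrank_le
      rw [Module.finrank_self] at hrange
      omega
    obtain ⟨G, hG, hGW⟩ := ih W hW
    have hGV i : G i ∈ V ∧ coeff (m.degree v) (G i) = 0 := by
      obtain ⟨u, hu, hu'⟩ := hGW i
      exact hu' ▸ ⟨u.2, hu⟩
    have hlt i : m.degree v ≺[m] m.degree (G i) := by
      refine lt_of_le_of_ne (hmin _ (hGV i).1 (hG.ne_zero i)) fun heq => ?_
      refine m.leadingCoeff_ne_zero_iff.mpr (hG.ne_zero i) ?_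
      rw [MonomialOrder.leadingCoeff, ← m.toSyn.injective heq, (hGV i).2]
    refine ⟨_, hG.snoc hv0 hlt, fun i => ?_⟩
    cases i using Fin.lastCases with
    | last => simpa only [Fin.snoc_last]
    | cast i => simpa only [Fin.snoc_castSucc] using (hGV i).1

theorem IsEchelon.linearIndependent {F : Fin ℓ → MvPolynomial σ K} (hF : IsEchelon m F) :
    LinearIndependent K F := by
  rw [Fintype.linearIndependent_iff]
  intro c hc
  induction ℓ with
  | zero => exact fun i => i.elim0
  | succ ℓ ih =>
    have hlin : linComb F c = 0 := by
      simpa only [linComb, Algebra.algebraMap_self, map_id, smul_eq_C_mul] using hc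
    have h0 : c 0 = 0 := by
      by_contra h0
      simpa [hlin, h0, hF.ne_zero] using hF.leadingCoeff_linComb h0
    refine Fin.cases h0 (ih hF.tail (Fin.tail c) ?_)
    simpa [Fin.sum_univ_succ, Fin.tail, h0] using hc

theorem dotProduct_map_C_mulVec {ι : Type*} [Fintype ι] (U : Matrix ι ι K)
    (F : ι → MvPolynomial σ K) (lam : ι → K) :
    ∑ i, C (lam i) * (U.map C).mulVec F i = ∑ i, C (Matrix.vecMul lam U i) * F i := by
  simp only [RingHom.map_vecMul]
  exact Matrix.dotProduct_mulVec _ _ _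

theorem exists_isUnit_isEchelon (m : MonomialOrder σ) {F : Fin ℓ → MvPolynomial σ K}
    (hF : LinearIndependent K F) :
    ∃ U : Matrix (Fin ℓ) (Fin ℓ) K, IsUnit U ∧ IsEchelon m ((U.map C).mulVec F) := by
  have : FiniteDimensional K (Submodule.span K (Set.range F)) :=
    .span_of_finite K (Set.finite_range F)
  obtain ⟨G, hG, hGF⟩ := exists_isEchelon_mem m (Submodule.span K (Set.range F)) (ℓ := ℓ)
    (by rw [finrank_span_eq_card hF, Fintype.card_fin])
  obtain ⟨U, hUG⟩ : ∃ U : Matrix (Fin ℓ) (Fin ℓ) K, (U.map C).mulVec F = G := by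
    choose U hU using fun i => (Submodule.mem_span_range_iff_exists_fun K).mp (hGF i)
    exact ⟨Matrix.of U, funext fun i =>
      (Finset.sum_congr rfl fun j _ => (smul_eq_C_mul _ _).symm).trans (hU i)⟩
  refine ⟨U, ?_, hUG ▸ hG⟩
  rw [← Matrix.vecMul_injective_iff_isUnit, ← Matrix.coe_vecMulLinear]
  refine (injective_iff_map_eq_zero _).mpr fun c hc => ?_
  refine funext (Fintype.linearIndependent_iff.mp hG.linearIndependent c ?_)
  have hsum := dotProduct_map_C_mulVec U F c
  rw [hUG, show Matrix.vecMul c U = 0 from hc] at hsum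
  simpa [smul_eq_C_mul] using hsum

theorem GenerallyIrreducible.mulVec {ι : Type*} [Fintype ι] [DecidableEq ι] [Infinite K]
    {F : ι → MvPolynomial σ K} (hF : GenerallyIrreducible F) {U : Matrix ι ι K} (hU : IsUnit U) :
    GenerallyIrreducible ((U.map C).mulVec F) := by
  obtain ⟨p, hp, hirr⟩ := hF
  let q : MvPolynomial ι K := bind₁ (Matrix.vecMul X (U.map C)) p
  have hq (lam : ι → K) : eval lam q = eval (Matrix.vecMul lam U) p := by
    have hX : eval lam ∘ Matrix.vecMul X (U.map C) = Matrix.vecMul lam U := by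
      ext i
      simp [Matrix.vecMul, dotProduct]
    rw [← hX, ← aeval_eq_eval, ← aeval_eq_eval]
    exact aeval_bind₁ _ _ _
  refine ⟨q, fun h0 => hp (MvPolynomial.funext fun lam => ?_), fun lam hlam => ?_⟩
  · obtain ⟨mu, rfl⟩ := Matrix.vecMul_surjective_iff_isUnit.mpr hU lam
    rw [← hq, h0]
    simp only [map_zero]
  · rw [dotProduct_map_C_mulVec]
    exact hirr _ (hq lam ▸ hlam)

theorem minorsIdeal_pointMatrix_mulVec {ι : Type*} [Fintype ι] [DecidableEq ι] {U : Matrix ι ι K}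
    (hU : IsUnit U) (F : ι → MvPolynomial σ K) (n : ℕ) :
    minorsIdeal (pointMatrix ((U.map C).mulVec F) n) = minorsIdeal (pointMatrix F n) := by
  have hmul : pointMatrix ((U.map C).mulVec F) n = U.map C * pointMatrix F n := by
    ext1 i j
    simp [pointMatrix, Matrix.mulVec, dotProduct]
    rfl
  rw [hmul]
  exact minorsIdeal_mul (hU.map (C.mapMatrix (m := ι))) _

end ChangeOfBasis

section KrullBound

variable {κ S : Type*} [CommRing S] {ℓ : ℕ}

theorem minorsIdeal_le_of_det_cons_mem {N : Matrix (Fin (ℓ + 1)) κ S} {g : Fin ℓ → κ} {q : Ideal S}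
    [hq : q.IsPrime] (hg : (N.submatrix Fin.succ g).det ∉ q)
    (hcons : ∀ j, (N.submatrix id (Fin.cons j g : Fin (ℓ + 1) → κ)).det ∈ q) :
    minorsIdeal N ≤ q := by
  let c : Fin (ℓ + 1) → S := fun i => (-1) ^ (i : ℕ) * (N.submatrix i.succAbove g).det
  have hc (j : κ) :
      Matrix.vecMul c N j = (N.submatrix id (Fin.cons j g : Fin (ℓ + 1) → κ)).det := by
    rw [Matrix.det_succ_column_zero, Matrix.vecMul, dotProduct]
    exact Finset.sum_congr rfl fun i _ => mul_right_comm _ _ _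
  have hc0 : c 0 = (N.submatrix Fin.succ g).det := by
    simp only [c, Fin.val_zero, pow_zero, one_mul, Fin.succAbove_zero]
  refine minorsIdeal_le_iff.mpr fun h => ?_
  have hmem : c 0 * (N.submatrix id h).det ∈ q :=
    mul_det_mem_of_vecMul_mem (fun j => (hc (h j)).symm ▸ hcons (h j)) 0
  exact (hq.mem_or_mem hmem).resolve_left (hc0 ▸ hg)

theorem height_minorsIdeal_le [IsNoetherianRing S] [Fintype κ] {N : Matrix (Fin (ℓ + 1)) κ S}
    [hN : (minorsIdeal N).IsPrime] {g : Fin ℓ → κ} (hg : Function.Injective g)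
    (hgN : (N.submatrix Fin.succ g).det ∉ minorsIdeal N) :
    (minorsIdeal N).height ≤ (Fintype.card κ - ℓ : ℕ) := by
  classical
  let d (j : κ) : S := (N.submatrix id (Fin.cons j g : Fin (ℓ + 1) → κ)).det
  have hd (i : Fin ℓ) : d (g i) = 0 :=
    Matrix.det_zero_of_column_eq (Fin.succ_ne_zero i).symm fun _ => rfl
  let s := (Finset.univ.image g)ᶜ.image d
  have hcard : s.card ≤ Fintype.card κ - ℓ := by
    refine Finset.card_image_le.trans_eq ?_
    rw [Finset.card_compl, Finset.card_image_of_injective _ hg, Finset.card_fin]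
  have hmin : minorsIdeal N ∈ (Ideal.span (s : Set S)).minimalPrimes := by
    refine ⟨⟨hN, Ideal.span_le.mpr ?_⟩, fun q ⟨hq, hsq⟩ hqN => ?_⟩
    · simp only [s, Finset.coe_image, Set.image_subset_iff]
      exact fun j _ => det_submatrix_mem_minorsIdeal N _
    · refine minorsIdeal_le_of_det_cons_mem (fun h => hgN (hqN h)) fun j => ?_
      by_cases hj : j ∈ Finset.univ.image g
      · obtain ⟨i, -, rfl⟩ := Finset.mem_image.mp hj
        exact (congrArg (· ∈ q) (hd i)).mpr q.zero_mem
      · exact hsq (Ideal.subset_span (Finset.mem_image_of_mem d (Finset.mem_compl.mpr hj)))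
  exact (Ideal.height_le_card_of_mem_minimalPrimes_span_finset hmin).trans (mod_cast hcard)

end KrullBound

section HeightMapC

variable {σ R : Type*} [CommRing R]

theorem isPrime_map_C (p : Ideal R) [p.IsPrime] : (p.map (C (σ := σ))).IsPrime := by
  rw [← Ideal.mk_ker (I := p), ← ker_map]
  exact RingHom.ker_isPrime _

theorem map_C_strictMono : StrictMono (Ideal.map (C (σ := σ) (R := R))) :=
  Monotone.strictMono_of_injective (fun _ _ => Ideal.map_mono) fun p q hpq => by
    ext a
    have hmem (p : Ideal R) : C a ∈ p.map (C (σ := σ)) ↔ a ∈ p :=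
      ⟨fun h => by simpa using mem_map_C_iff.mp h 0, Ideal.mem_map_of_mem C⟩
    rw [← hmem p, hpq, hmem]

theorem height_le_height_map_C (p : Ideal R) [p.IsPrime] :
    p.height ≤ (p.map (C (σ := σ))).height := by
  let e (q : PrimeSpectrum R) : PrimeSpectrum (MvPolynomial σ R) :=
    ⟨q.asIdeal.map C, isPrime_map_C q.asIdeal⟩
  have he : StrictMono e := fun q q' h => map_C_strictMono h
  have h := Order.height_le_height_apply_of_strictMono e he ⟨p, ‹_›⟩
  rwa [← PrimeSpectrum.height_eq_orderHeight, ← PrimeSpectrum.height_eq_orderHeight] at h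

end HeightMapC

section HeightEchelon

variable {σ K : Type*} [Field K] {m : MonomialOrder σ} {ℓ n : ℕ}

theorem IsEchelon.det_pointMatrix_ne_zero {F : Fin ℓ → MvPolynomial σ K} (hF : IsEchelon m F) :
    (pointMatrix F ℓ).det ≠ 0 := by
  induction ℓ with
  | zero => exact Matrix.det_isEmpty (A := pointMatrix F 0) ▸ one_ne_zero
  | succ ℓ ih =>
    intro h0
    have hcoeff := hF.coeff_splitBlock_det_cons (id : Fin ℓ → Fin ℓ)
    have hid : (Fin.cons 0 (Fin.succ ∘ id) : Fin (ℓ + 1) → _) = id := Fin.cons_self_tail id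
    rw [hid, Matrix.submatrix_id_id, Matrix.submatrix_id_id, h0, map_zero, coeff_zero] at hcoeff
    exact mul_ne_zero (ih hF.tail) (hF.isUnit_algebraMap_leadingCoeff 0).ne_zero hcoeff.symm

theorem IsEchelon.det_tail_notMem_minorsIdeal {F : Fin (ℓ + 1) → MvPolynomial σ K}
    (hF : IsEchelon m F) {g : Fin ℓ → Fin n} (hg : Function.Injective g)
    (hn : minorsIdeal (pointMatrix F n) ≠ ⊤) :
    ((pointMatrix (Fin.tail F) n).submatrix id g).det ∉ minorsIdeal (pointMatrix F n) := by
  intro hmem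
  cases ℓ with
  | zero =>
    rw [Matrix.det_isEmpty] at hmem
    exact hn ((Ideal.eq_top_iff_one _).mpr hmem)
  | succ ℓ =>
    obtain ⟨r, hr⟩ := hg.hasLeftInverse
    have hmem' := map_rename_minorsIdeal_le F r (Ideal.mem_map_of_mem _ hmem)
    rw [minorsIdeal_eq_bot (by simp), Ideal.mem_bot, AlgHom.map_det, AlgHom.mapMatrix_apply,
      ← Matrix.submatrix_map, map_rename_pointMatrix, Matrix.submatrix_submatrix, hr.id,
      Function.id_comp, Matrix.submatrix_id_id] at hmem'
    exact hF.tail.det_pointMatrix_ne_zero hmem'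

theorem IsEchelon.le_height_minorsIdeal {F : Fin (ℓ + 1) → MvPolynomial σ K} (hF : IsEchelon m F)
    [hprime : ∀ n, (minorsIdeal (pointMatrix F n)).IsPrime] (hn : ℓ ≤ n) :
    (n - ℓ : ℕ) ≤ (minorsIdeal (pointMatrix F n)).height := by
  induction n, hn using Nat.le_induction with
  | base => simp
  | succ n hn ih =>
    have hp := isPrime_map_C (σ := σ) (minorsIdeal (pointMatrix F n))
    have hlt : (minorsIdeal (pointMatrix F n)).map (C (σ := σ)) <
        (minorsIdeal (pointMatrix F (n + 1))).map (splitBlock σ K n) := by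
      refine lt_of_le_not_ge (map_C_minorsIdeal_le F n) fun hge => ?_
      have hmem := hge <| Ideal.mem_map_of_mem (splitBlock σ K n) <| det_submatrix_mem_minorsIdeal
        (pointMatrix F (n + 1)) (Fin.cons 0 (Fin.succ ∘ Fin.castLE hn) : Fin (ℓ + 1) → _)
      have hcoeff := mem_map_C_iff.mp hmem (m.degree (F 0))
      rw [hF.coeff_splitBlock_det_cons,
        Ideal.mul_unit_mem_iff_mem _ (hF.isUnit_algebraMap_leadingCoeff 0)] at hcoeff
      exact hF.det_tail_notMem_minorsIdeal (Fin.castLE_injective hn) (hprime n).ne_top hcoeff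
    have hp' := Ideal.map_isPrime_of_equiv (splitBlock σ K n)
      (I := minorsIdeal (pointMatrix F (n + 1)))
    calc ((n + 1 - ℓ : ℕ) : ℕ∞) = (n - ℓ : ℕ) + 1 := by rw [Nat.succ_sub hn, Nat.cast_succ]
      _ ≤ (minorsIdeal (pointMatrix F n)).height + 1 := by gcongr
      _ ≤ ((minorsIdeal (pointMatrix F n)).map (C (σ := σ))).height + 1 := by
        gcongr
        exact height_le_height_map_C _
      _ ≤ ((minorsIdeal (pointMatrix F (n + 1))).map (splitBlock σ K n)).height :=
        Ideal.height_add_one_le_of_lt_of_isPrime hlt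
      _ = _ := (splitBlock σ K n).toRingEquiv.height_map _

end HeightEchelon

section Main

variable {σ K : Type*} [Field K] [IsAlgClosed K] [Finite σ] {ℓ n : ℕ}

theorem IsEchelon.isPrime_minorsIdeal {m : MonomialOrder σ} {F : Fin (ℓ + 1) → MvPolynomial σ K}
    (hF : IsEchelon m F) (hirr : GenerallyIrreducible F) (n : ℕ) :
    (minorsIdeal (pointMatrix F n)).IsPrime :=
  hF.minorsIdeal_eq_genericIdeal n ▸ genericIdeal_isPrime hirr n

theorem IsEchelon.height_minorsIdeal {m : MonomialOrder σ} {F : Fin (ℓ + 1) → MvPolynomial σ K}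
    (hF : IsEchelon m F) (hirr : GenerallyIrreducible F) (hn : ℓ ≤ n) :
    (minorsIdeal (pointMatrix F n)).height = (n - ℓ : ℕ) := by
  have hprime := hF.isPrime_minorsIdeal hirr
  have hinj := Fin.castLE_injective hn
  refine le_antisymm ?_ (hF.le_height_minorsIdeal hn)
  simpa only [Fintype.card_fin] using height_minorsIdeal_le hinj
    (hF.det_tail_notMem_minorsIdeal hinj (hprime n).ne_top)

end Main

end GenericMinors

open GenericMinors in
theorem minors_ideal_prime_of_general_irreducible_general {σ K : Type*} [Field K] [IsAlgClosed K]
    [Finite σ] {ℓ n : ℕ} (hn : ℓ ≤ n) (hℓ : 1 ≤ ℓ) {F : Fin ℓ → MvPolynomial σ K}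
    (hF : LinearIndependent K F) (hirr : GenerallyIrreducible F) :
    ∃ hp : (minorsIdeal (pointMatrix F n)).IsPrime,
      Order.height (⟨_, hp⟩ : PrimeSpectrum (MvPolynomial (σ × Fin n) K)) = (n - ℓ + 1 : ℕ) := by
  obtain ⟨ℓ, rfl⟩ := Nat.exists_eq_add_of_le' hℓ
  classical
  let _ : LinearOrder σ := linearOrderOfSTO WellOrderingRel
  obtain ⟨U, hU, hE⟩ := exists_isUnit_isEchelon (MonomialOrder.degLex (σ := σ)) hF
  have hirr' := hirr.mulVec hU
  rw [← minorsIdeal_pointMatrix_mulVec hU]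
  refine ⟨hE.isPrime_minorsIdeal hirr' n, ?_⟩
  rw [← PrimeSpectrum.height_eq_orderHeight, hE.height_minorsIdeal hirr' (Nat.le_of_succ_le hn)]
  congr 1
  omega

/-- Let `F₁,…,F_ℓ ∈ ℂ[x₁,…,x_k]` be linearly independent and
such that a general linear combination `λ₁F₁ + … + λ_ℓF_ℓ` is irreducible
(genericity expressed by a nonzero polynomial condition on `λ`). For `n ≥ ℓ`,
form the `ℓ×n` matrix whose `(i,j)` entry is `Fᵢ` evaluated in the `j`-th block
of variables. Then the ideal of its maximal `ℓ×ℓ` minors in `ℂ[x_{ij}]` is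
prime of codimension (= height) `n - ℓ + 1`. -/
theorem minors_ideal_prime_of_general_irreducible (k ℓ n : ℕ)
    (hn : ℓ ≤ n) (hℓ : 1 ≤ ℓ)
    (F : Fin ℓ → MvPolynomial (Fin k) ℂ)
    (hFli : LinearIndependent ℂ F)
    (hFgen : ∃ p : MvPolynomial (Fin ℓ) ℂ, p ≠ 0 ∧
      ∀ lam : Fin ℓ → ℂ, eval lam p ≠ 0 →
        Irreducible (∑ i, MvPolynomial.C (lam i) * F i))
    (A : Matrix (Fin ℓ) (Fin n) (MvPolynomial (Fin k × Fin n) ℂ))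
    (hA : ∀ i j, A i j = rename (fun a => (a, j)) (F i))
    (I : Ideal (MvPolynomial (Fin k × Fin n) ℂ))
    (hI : I = Ideal.span {d | ∃ g : Fin ℓ → Fin n,
      Function.Injective g ∧ d = (A.submatrix id g).det}) :
    ∃ hp : I.IsPrime,
      Order.height (⟨I, hp⟩ : PrimeSpectrum (MvPolynomial (Fin k × Fin n) ℂ))
        = (n - ℓ + 1 : ℕ) := by
  obtain rfl : A = GenericMinors.pointMatrix F n := Matrix.ext hA
  exact hI ▸ minors_ideal_prime_of_general_irreducible_general hn hℓ hFli hFgen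
end

section
/- For n ≥ 3, the ABCT variety V(3,n) ⊆ G(3,n), defined as the Zariski closure of the image of the quadratic Veronese map θ_2: G(2,n) ⇢ G(3,n), coincides (as a variety) with the degeneracy locus Z_2(3,n) of 3-dimensional subspaces of ℂ^n whose representing 3×n matrices have columnwise quadratic Veronese image of rank at most 5. -/
/-- The row span of a matrix, as a subspace of `ℂⁿ`. -/
noncomputable def rowSpan {n : ℕ} {ι : Type*} (A : Matrix ι (Fin n) ℂ) : Submodule ℂ (Fin n → ℂ) :=
  Submodule.span ℂ (Set.range fun i => A i)

/-- The columnwise quadratic Veronese image of a `2×n` matrix with columns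
`(xⱼ, yⱼ)`: the `3×n` matrix with columns `(xⱼ², xⱼyⱼ, yⱼ²)`. -/
noncomputable def ver2 {n : ℕ} (M : Matrix (Fin 2) (Fin n) ℂ) : Matrix (Fin 3) (Fin n) ℂ :=
  Matrix.of fun i j => ![M 0 j * M 0 j, M 0 j * M 1 j, M 1 j * M 1 j] i

/-- The `6×n` matrix of all quadratic monomials of the columns of a `3×n`
matrix. -/
noncomputable def quadOf {n : ℕ} (A : Matrix (Fin 3) (Fin n) ℂ) : Matrix (Sym (Fin 3) 2) (Fin n) ℂ :=
  Matrix.of fun s j => ((s : Multiset (Fin 3)).map fun i => A i j).prod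

/-!
Both sides are conditions on a rank 3 matrix `A` that only depend on its row span; in particular
the row span of `quadOf A` is the product of the row span of `A` with itself inside `ℂⁿ`.

The locus `Z₂` is closed, and it contains the image of `θ₂` because of the relation
`x² · y² = (xy)²`. Conversely, let the columns of `A` lie on a conic. Choosing three independent
columns as coordinate points, the conic becomes `β₀ yz + β₁ zx + β₂ xy = 0`, and, say when
`β₀ ≠ 0`, completing the product brings it to the form `x z = k y²`. If `k ≠ 0`, taking square
roots shows that `A` represents a point of the image of `θ₂`; if `k = 0`, the columns lie on a pair
of lines and can be moved onto the smooth conics `x z = s² y²` with `s → 0`.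
-/

open Matrix Module Topology

section Rank

variable {ι κ K : Type*} [Fintype ι] [Fintype κ] [Field K]

lemma linearIndependent_rows_iff_rank_eq_card (A : Matrix ι κ K) :
    LinearIndependent K A.row ↔ A.rank = Fintype.card ι := by
  rw [linearIndependent_iff_card_eq_finrank_span, A.rank_eq_finrank_span_row, eq_comm]
  rfl

lemma exists_isUnit_det_submatrix_of_rank_eq_card [DecidableEq ι] {A : Matrix ι κ K}
    (hA : A.rank = Fintype.card ι) : ∃ f : ι → κ, IsUnit (A.submatrix id f).det := by
  obtain ⟨v, hv_mem, -, hv⟩ := Submodule.exists_fun_fin_finrank_span_eq K (Set.range A.col)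
  choose f hf using hv_mem
  rw [A.rank_eq_finrank_span_cols] at hA
  let e : ι ≃ Fin (finrank K (Submodule.span K (Set.range A.col))) :=
    Fintype.equivFinOfCardEq hA.symm
  refine ⟨f ∘ e, ?_⟩
  rw [← isUnit_iff_isUnit_det, ← linearIndependent_cols_iff_isUnit]
  have hcol : (A.submatrix id (f ∘ e)).col = v ∘ e := funext fun i => hf (e i)
  exact hcol ▸ hv.comp e e.injective

end Rank

section RowSpan

variable {n : ℕ} {ι : Type*}

lemma rank_eq_finrank_rowSpan [Finite ι] (A : Matrix ι (Fin n) ℂ) :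
    A.rank = finrank ℂ (rowSpan A) :=
  A.rank_eq_finrank_span_row

lemma rowSpan_mul_le {κ : Type*} [Fintype κ] (P : Matrix ι κ ℂ) (A : Matrix κ (Fin n) ℂ) :
    rowSpan (P * A) ≤ rowSpan A := by
  refine Submodule.span_le.2 ?_
  rintro _ ⟨i, rfl⟩
  refine (Submodule.mem_span_range_iff_exists_fun ℂ).2 ⟨P i, ?_⟩
  ext j
  simp [Matrix.mul_apply]

lemma rowSpan_mul_of_isUnit_det [Fintype ι] [DecidableEq ι] {P : Matrix ι ι ℂ}
    (hP : IsUnit P.det) (A : Matrix ι (Fin n) ℂ) : rowSpan (P * A) = rowSpan A := by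
  refine le_antisymm (rowSpan_mul_le P A) ?_
  simpa only [nonsing_inv_mul_cancel_left P A hP] using rowSpan_mul_le P⁻¹ (P * A)

end RowSpan

section QuadraticMonomials

variable {n : ℕ}

lemma quadOf_pair (A : Matrix (Fin 3) (Fin n) ℂ) (i k : Fin 3) :
    quadOf A ⟨{i, k}, rfl⟩ = A i * A k := by
  ext j
  exact Multiset.prod_pair (A i j) (A k j)

lemma rowSpan_quadOf (A : Matrix (Fin 3) (Fin n) ℂ) :
    rowSpan (quadOf A) = rowSpan A * rowSpan A := by
  rw [rowSpan, rowSpan, Submodule.span_mul_span]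
  congr 1
  ext r
  constructor
  · rintro ⟨⟨s, hs⟩, rfl⟩
    obtain ⟨i, k, rfl⟩ := Multiset.card_eq_two.1 hs
    exact ⟨A i, ⟨i, rfl⟩, A k, ⟨k, rfl⟩, (quadOf_pair A i k).symm⟩
  · rintro ⟨_, ⟨i, rfl⟩, _, ⟨k, rfl⟩, rfl⟩
    exact ⟨⟨{i, k}, rfl⟩, quadOf_pair A i k⟩

lemma rank_quadOf_congr {A B : Matrix (Fin 3) (Fin n) ℂ} (h : rowSpan A = rowSpan B) :
    (quadOf A).rank = (quadOf B).rank := by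
  rw [rank_eq_finrank_rowSpan, rank_eq_finrank_rowSpan, rowSpan_quadOf, rowSpan_quadOf, h]

lemma rank_quadOf_le_five_iff (A : Matrix (Fin 3) (Fin n) ℂ) :
    (quadOf A).rank ≤ 5 ↔ ¬ LinearIndependent ℂ (quadOf A).row := by
  have hcard : Fintype.card (Sym (Fin 3) 2) = 6 := by
    rw [Sym.card_sym_eq_choose, Fintype.card_fin]
    rfl
  have hle := (quadOf A).rank_le_card_height
  rw [linearIndependent_rows_iff_rank_eq_card]
  omega

lemma isClosed_setOf_rank_quadOf_le_five :
    IsClosed {A : Matrix (Fin 3) (Fin n) ℂ | (quadOf A).rank ≤ 5} := by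
  simp_rw [rank_quadOf_le_five_iff]
  have hcont : Continuous fun A : Matrix (Fin 3) (Fin n) ℂ => (quadOf A).row :=
    continuous_pi fun s => continuous_pi fun j =>
      continuous_multiset_prod _ fun i _ => continuous_id.matrix_elem i j
  exact (isOpen_setOfPred_linearIndependent.preimage hcont).isClosed_compl

/-- The six quadratic monomials in three variables: `Sum.inl i` is the square `xᵢ²` and `Sum.inr i`
is the mixed monomial `xᵢ₊₁ xᵢ₊₂` without `xᵢ`, the indices being taken modulo `3`. -/
def quadraticMonomial : Fin 3 ⊕ Fin 3 → Sym (Fin 3) 2 :=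
  Sum.elim (fun i => ⟨{i, i}, rfl⟩) (fun i => ⟨{i + 1, i + 2}, rfl⟩)

lemma quadraticMonomial_bijective : Function.Bijective quadraticMonomial := by
  decide

lemma quadOf_inl (A : Matrix (Fin 3) (Fin n) ℂ) (i : Fin 3) :
    quadOf A (quadraticMonomial (.inl i)) = A i * A i :=
  quadOf_pair A i i

lemma quadOf_inr (A : Matrix (Fin 3) (Fin n) ℂ) (i : Fin 3) :
    quadOf A (quadraticMonomial (.inr i)) = A (i + 1) * A (i + 2) :=
  quadOf_pair A (i + 1) (i + 2)

lemma sum_mul_quadOf (c : Sym (Fin 3) 2 → ℂ) (A : Matrix (Fin 3) (Fin n) ℂ) (j : Fin n) :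
    ∑ s, c s * quadOf A s j =
      ∑ i, c (quadraticMonomial (.inl i)) * A i j ^ 2 +
        ∑ i, c (quadraticMonomial (.inr i)) * (A (i + 1) j * A (i + 2) j) := by
  rw [← quadraticMonomial_bijective.sum_comp, Fintype.sum_sum_type]
  simp only [quadOf_inl, quadOf_inr, Pi.mul_apply, sq]

lemma exists_mixed_relation_of_rank_quadOf_le_five {B : Matrix (Fin 3) (Fin n) ℂ}
    (hB : (quadOf B).rank ≤ 5) {f : Fin 3 → Fin n} (hf : B.submatrix id f = 1) :
    ∃ β : Fin 3 → ℂ, β ≠ 0 ∧ ∀ j, ∑ i, β i * (B (i + 1) j * B (i + 2) j) = 0 := by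
  rw [rank_quadOf_le_five_iff, Fintype.not_linearIndependent_iff] at hB
  obtain ⟨c, hc, s, hs⟩ := hB
  have hrel (j : Fin n) : ∑ s, c s * quadOf B s j = 0 := by
    simpa using congrFun hc j
  have hBf (i k : Fin 3) : B i (f k) = (1 : Matrix (Fin 3) (Fin 3) ℂ) i k :=
    congrFun₂ hf i k
  have hsq (i : Fin 3) : c (quadraticMonomial (.inl i)) = 0 := by
    have h := hrel (f i)
    rw [sum_mul_quadOf] at h
    fin_cases i <;> simpa [Fin.sum_univ_three, hBf, Matrix.one_apply] using h
  refine ⟨fun i => c (quadraticMonomial (.inr i)), fun hβ => hs ?_, fun j => ?_⟩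
  · obtain ⟨i | i, rfl⟩ := quadraticMonomial_bijective.2 s
    · exact hsq i
    · exact congrFun hβ i
  · simpa [sum_mul_quadOf, hsq] using hrel j

end QuadraticMonomials

section PlaneConics

lemma exists_isUnit_det_mul_eq_sq_of_mixed_relation {κ K : Type*} [Field K]
    {B : Matrix (Fin 3) κ K} {β : Fin 3 → K} (hβ : β ≠ 0)
    (hB : ∀ j, ∑ i, β i * (B (i + 1) j * B (i + 2) j) = 0) :
    ∃ P : Matrix (Fin 3) (Fin 3) K, IsUnit P.det ∧
      ∃ k, ∀ j, (P * B) 0 j * (P * B) 2 j = k * (P * B) 1 j ^ 2 := by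
  obtain ⟨i, hi : β i ≠ 0⟩ := Function.ne_iff.1 hβ
  -- For `i = 0`: `β₀ (β₀ yz + β₁ zx + β₂ xy) = (β₀ y + β₁ x) (β₀ z + β₂ x) - β₁ β₂ x²`.
  let P : Matrix (Fin 3) (Fin 3) K :=
    of ![β i • Pi.single (i + 1) 1 + β (i + 1) • Pi.single i 1,
      Pi.single i 1,
      β i • Pi.single (i + 2) 1 + β (i + 2) • Pi.single i 1]
  have hP : IsUnit P.det := by
    fin_cases i <;> simpa [P, det_fin_three] using hi
  have hPB : P * B = of ![β i • B.row (i + 1) + β (i + 1) • B.row i,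
      B.row i,
      β i • B.row (i + 2) + β (i + 2) • B.row i] := by
    simp [P, add_vecMul, smul_vecMul]
  refine ⟨P, hP, β (i + 1) * β (i + 2), fun j => ?_⟩
  have hcyc : β i * (B (i + 1) j * B (i + 2) j) + β (i + 1) * (B (i + 2) j * B i j) +
      β (i + 2) * (B i j * B (i + 1) j) = 0 := by
    rw [← hB j, Fin.sum_univ_three]
    fin_cases i <;>
      simp only [Fin.zero_eta, Fin.mk_one, Fin.reduceFinMk, zero_add, Fin.reduceAdd] <;>
      ring
  simp only [hPB, of_apply, cons_val, Pi.add_apply, Pi.smul_apply, smul_eq_mul, row]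
  linear_combination β i * hcyc

lemma exists_mul_self_eq_and_mul_eq {K : Type*} [Field K] [IsAlgClosed K] {a b c : K}
    (h : a * b = c ^ 2) : ∃ x y : K, x * x = a ∧ x * y = c ∧ y * y = b := by
  obtain ⟨x, rfl⟩ := IsAlgClosed.exists_eq_mul_self a
  obtain rfl | hx := eq_or_ne x 0
  · obtain ⟨y, rfl⟩ := IsAlgClosed.exists_eq_mul_self b
    have hc : c = 0 := by simpa using h.symm
    exact ⟨0, y, rfl, by rw [hc, zero_mul], rfl⟩
  · exact ⟨x, c / x, rfl, by field_simp, by field_simp; linear_combination -h⟩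

lemma exists_continuous_mul_eq_sq_of_mul_eq_zero {K : Type*} [Field K] [TopologicalSpace K]
    [IsTopologicalRing K] {v : Fin 3 → K} (hv : v 0 * v 2 = 0) :
    ∃ γ : K → Fin 3 → K, Continuous γ ∧ γ 0 = v ∧ ∀ s, γ s 0 * γ s 2 = s ^ 2 * γ s 1 ^ 2 := by
  by_cases h0 : v 0 = 0
  · by_cases h2 : v 2 = 0
    · refine ⟨fun s => ![s * v 1, v 1, s * v 1], by fun_prop, ?_, fun s => ?_⟩
      · ext i
        fin_cases i <;> simp [h0, h2]
      · simp only [cons_val]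
        ring
    · refine ⟨fun s => ![s ^ 2 * v 1 ^ 2 / v 2, v 1, v 2], by fun_prop, ?_, fun s => ?_⟩
      · ext i
        fin_cases i <;> simp [h0]
      · simp [h2]
  · refine ⟨fun s => ![v 0, v 1, s ^ 2 * v 1 ^ 2 / v 0], by fun_prop, ?_, fun s => ?_⟩
    · ext i
      fin_cases i <;> simp_all
    · simp only [cons_val]
      field_simp

end PlaneConics

section VeroneseImage

variable {n : ℕ}

/-- The `3×n` matrices of rank `3` whose row span is in the image of the quadratic Veronese map
`θ₂ : G(2,n) ⇢ G(3,n)`. -/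
def veroneseImage (n : ℕ) : Set (Matrix (Fin 3) (Fin n) ℂ) :=
  {B | B.rank = 3 ∧ ∃ M : Matrix (Fin 2) (Fin n) ℂ, M.rank = 2 ∧ rowSpan B = rowSpan (ver2 M)}

lemma rank_quadOf_ver2_le_five (M : Matrix (Fin 2) (Fin n) ℂ) : (quadOf (ver2 M)).rank ≤ 5 := by
  rw [rank_quadOf_le_five_iff]
  intro hli
  have hrows : (quadOf (ver2 M)).row (quadraticMonomial (.inr 1)) =
      (quadOf (ver2 M)).row (quadraticMonomial (.inl 1)) := by
    ext j
    simp only [row, quadOf_inl, quadOf_inr, Pi.mul_apply]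
    change M 1 j * M 1 j * (M 0 j * M 0 j) = M 0 j * M 1 j * (M 0 j * M 1 j)
    ring
  exact Sum.inr_ne_inl (quadraticMonomial_bijective.injective (hli.injective hrows))

lemma closure_veroneseImage_subset :
    closure (veroneseImage n) ⊆ {A | (quadOf A).rank ≤ 5} := by
  refine closure_minimal ?_ isClosed_setOf_rank_quadOf_le_five
  rintro B ⟨-, M, -, hBM⟩
  exact (rank_quadOf_congr hBM).trans_le (rank_quadOf_ver2_le_five M)

lemma mul_mem_veroneseImage {P : Matrix (Fin 3) (Fin 3) ℂ} (hP : IsUnit P.det)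
    {A : Matrix (Fin 3) (Fin n) ℂ} (hA : A ∈ veroneseImage n) : P * A ∈ veroneseImage n := by
  rwa [veroneseImage, Set.mem_ofPred_eq, rank_mul_eq_right_of_isUnit_det P A hP,
    rowSpan_mul_of_isUnit_det hP]

lemma mem_closure_veroneseImage_of_mul_mem {P : Matrix (Fin 3) (Fin 3) ℂ} (hP : IsUnit P.det)
    {A : Matrix (Fin 3) (Fin n) ℂ} (h : P * A ∈ closure (veroneseImage n)) :
    A ∈ closure (veroneseImage n) := by
  have hcont : Continuous fun B : Matrix (Fin 3) (Fin n) ℂ => P⁻¹ * B := by fun_prop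
  have hmaps : Set.MapsTo (P⁻¹ * ·) (veroneseImage n) (veroneseImage n) := fun _ hB =>
    mul_mem_veroneseImage (isUnit_nonsing_inv_det P hP) hB
  simpa only [nonsing_inv_mul_cancel_left P A hP] using map_mem_closure hcont h hmaps

lemma rank_eq_two_of_rank_ver2_eq_three {M : Matrix (Fin 2) (Fin n) ℂ} (hM : (ver2 M).rank = 3) :
    M.rank = 2 := by
  have hver2 : LinearIndependent ℂ (ver2 M).row :=
    (linearIndependent_rows_iff_rank_eq_card _).2 hM
  have hmul : (ver2 M).row ∘ Fin.castSucc = LinearMap.mulLeft ℂ (M 0) ∘ M.row := by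
    ext i
    fin_cases i <;> rfl
  refine (linearIndependent_rows_iff_rank_eq_card M).1 (.of_comp (LinearMap.mulLeft ℂ (M 0)) ?_)
  exact hmul ▸ hver2.comp Fin.castSucc (Fin.castSucc_injective 2)

lemma mem_veroneseImage_of_mul_eq_sq {B : Matrix (Fin 3) (Fin n) ℂ} (hrank : B.rank = 3) {k : ℂ}
    (hk : k ≠ 0) (hB : ∀ j, B 0 j * B 2 j = k * B 1 j ^ 2) : B ∈ veroneseImage n := by
  obtain ⟨t, rfl⟩ := IsAlgClosed.exists_eq_mul_self k
  have hroots (j : Fin n) : ∃ x y, x * x = B 0 j ∧ x * y = t * B 1 j ∧ y * y = B 2 j :=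
    exists_mul_self_eq_and_mul_eq (by rw [hB]; ring)
  choose x y hxx hxy hyy using hroots
  let P : Matrix (Fin 3) (Fin 3) ℂ := diagonal ![1, t, 1]
  have hP : IsUnit P.det := by simpa [P, Fin.prod_univ_three] using hk
  have hver2 : ver2 (of ![x, y]) = P * B := by
    ext i j
    fin_cases i <;> simp [P, ver2, hxx, hxy, hyy]
  refine ⟨hrank, of ![x, y], rank_eq_two_of_rank_ver2_eq_three ?_, ?_⟩
  · rw [hver2, rank_mul_eq_right_of_isUnit_det P B hP, hrank]
  · rw [hver2, rowSpan_mul_of_isUnit_det hP]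

lemma mem_closure_veroneseImage_of_mul_eq_zero {B : Matrix (Fin 3) (Fin n) ℂ}
    (hrank : B.rank = 3) (hB : ∀ j, B 0 j * B 2 j = 0) : B ∈ closure (veroneseImage n) := by
  choose γ hγ_cont hγ_zero hγ using fun j =>
    exists_continuous_mul_eq_sq_of_mul_eq_zero (v := B.col j) (hB j)
  let C : ℂ → Matrix (Fin 3) (Fin n) ℂ := fun s => of fun i j => γ j s i
  have hC : Continuous C :=
    continuous_matrix fun i j => (continuous_apply i).comp (hγ_cont j)
  have hC0 : C 0 = B := by
    ext i j
    exact congrFun (hγ_zero j) i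
  have hrank_near : ∀ᶠ s in 𝓝 (0 : ℂ), (C s).rank = 3 := by
    have hB_indep : LinearIndependent ℂ B.row :=
      (linearIndependent_rows_iff_rank_eq_card B).2 hrank
    rw [← hC0] at hB_indep
    filter_upwards [hC.continuousAt.eventually hB_indep.eventually] with s hs
    exact (linearIndependent_rows_iff_rank_eq_card (C s)).1 hs
  have hmem : ∀ᶠ s in 𝓝[≠] (0 : ℂ), C s ∈ veroneseImage n := by
    filter_upwards [nhdsWithin_le_nhds hrank_near, self_mem_nhdsWithin] with s hs hs0
    exact mem_veroneseImage_of_mul_eq_sq hs (pow_ne_zero 2 hs0) fun j => hγ j s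
  exact mem_closure_of_tendsto (hC0 ▸ hC.continuousAt.tendsto.mono_left nhdsWithin_le_nhds) hmem

lemma mem_closure_veroneseImage_of_mul_eq_sq {B : Matrix (Fin 3) (Fin n) ℂ} (hrank : B.rank = 3)
    {k : ℂ} (hB : ∀ j, B 0 j * B 2 j = k * B 1 j ^ 2) : B ∈ closure (veroneseImage n) := by
  obtain rfl | hk := eq_or_ne k 0
  · exact mem_closure_veroneseImage_of_mul_eq_zero hrank fun j => by rw [hB, zero_mul]
  · exact subset_closure (mem_veroneseImage_of_mul_eq_sq hrank hk hB)

lemma mem_closure_veroneseImage_of_rank_quadOf_le_five {A : Matrix (Fin 3) (Fin n) ℂ}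
    (hrank : A.rank = 3) (hA : (quadOf A).rank ≤ 5) : A ∈ closure (veroneseImage n) := by
  obtain ⟨f, hf⟩ :=
    exists_isUnit_det_submatrix_of_rank_eq_card (hrank.trans (Fintype.card_fin 3).symm)
  have hP := isUnit_nonsing_inv_det _ hf
  set P := (A.submatrix id f)⁻¹
  have hPf : (P * A).submatrix id f = 1 := nonsing_inv_mul _ hf
  have hPA : (quadOf (P * A)).rank ≤ 5 :=
    (rank_quadOf_congr (rowSpan_mul_of_isUnit_det hP A)).trans_le hA
  obtain ⟨β, hβ, hrel⟩ := exists_mixed_relation_of_rank_quadOf_le_five hPA hPf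
  obtain ⟨Q, hQ, k, hk⟩ := exists_isUnit_det_mul_eq_sq_of_mixed_relation hβ hrel
  refine mem_closure_veroneseImage_of_mul_mem hP (mem_closure_veroneseImage_of_mul_mem hQ ?_)
  refine mem_closure_veroneseImage_of_mul_eq_sq ?_ hk
  rw [rank_mul_eq_right_of_isUnit_det _ _ hQ, rank_mul_eq_right_of_isUnit_det _ _ hP, hrank]

end VeroneseImage

/-- For `n ≥ 3`, the ABCT variety `V(3,n) ⊆ G(3,n)` — the
closure of the image of the quadratic Veronese map `θ₂ : G(2,n) ⇢ G(3,n)` —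
coincides, as a subvariety of the Grassmannian, with the degeneracy locus
`Z₂(3,n)` of subspaces whose representing `3×n` matrices have columnwise
quadratic Veronese matrix of rank at most `5`.  The Grassmannian is modeled as
row spans of full-rank matrices; the closure is taken in the space of `3×n`
complex matrices (for the image of a polynomial map, the Zariski closure of
the constructible image agrees with this closure). -/
theorem V3n_eq_Z23n (n : ℕ) (hn : 3 ≤ n) :
    {W : Submodule ℂ (Fin n → ℂ) | ∃ A : Matrix (Fin 3) (Fin n) ℂ,
        A.rank = 3 ∧ rowSpan A = W ∧
        A ∈ closure {B : Matrix (Fin 3) (Fin n) ℂ | B.rank = 3 ∧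
          ∃ M : Matrix (Fin 2) (Fin n) ℂ, M.rank = 2 ∧ rowSpan B = rowSpan (ver2 M)}} =
    {W : Submodule ℂ (Fin n → ℂ) | ∃ A : Matrix (Fin 3) (Fin n) ℂ,
        A.rank = 3 ∧ rowSpan A = W ∧ (quadOf A).rank ≤ 5} := by
  ext W
  refine exists_congr fun A => and_congr_right fun hrank => and_congr_right fun _ => ?_
  exact ⟨fun hA => closure_veroneseImage_subset hA,
    fun hA => mem_closure_veroneseImage_of_rank_quadOf_le_five hrank hA⟩
end
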